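/- arXiv:2311.07542 — 4 statements merged into one kernel-verified Lean document; each statement's English description precedes it below -/
import Mathlib

section
/- Let n ≥ 2 and let Γ ⊂ ℝⁿ satisfy condition (C) with λ* = (1,−1,…,−1) ∈ Γ. Then every upper semi-continuous function v : ℝⁿ → [−∞,∞), v ≢ −∞, satisfying λ(A[v]) ∈ ℝⁿ∖Γ on ℝⁿ in the viscosity sense must be constant. -/
open Filter Topology MeasureTheory Metric Set
open scoped BigOperators ENNReal NNReal

noncomputable section

/-- `ℝⁿ` with the Euclidean norm. -/
abbrev Euc (n : ℕ) := EuclideanSpace ℝ (Fin n)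

/-- The positive cone `Γₙ = {λ : λᵢ > 0 ∀ i}`. -/
def GammaN (n : ℕ) : Set (Fin n → ℝ) := {lam | ∀ i, 0 < lam i}

/-- Condition (C): `Γ ⊊ ℝⁿ` is a nonempty open symmetric cone with vertex at the origin
satisfying `Γ + Γₙ ⊆ Γ`. -/
def CondC {n : ℕ} (Γ : Set (Fin n → ℝ)) : Prop :=
  Γ.Nonempty ∧ Γ ≠ Set.univ ∧ IsOpen Γ ∧
    (∀ σ : Equiv.Perm (Fin n), ∀ lam ∈ Γ, lam ∘ σ ∈ Γ) ∧
    (∀ lam ∈ Γ, ∀ t : ℝ, 0 < t → t • lam ∈ Γ) ∧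
    (∀ lam ∈ Γ, ∀ mu ∈ GammaN n, lam + mu ∈ Γ)

/-- `λ* = (1, -1, …, -1)`. -/
def lamStar (n : ℕ) : Fin n → ℝ := fun i => if i.val = 0 then 1 else -1

/-- Partial derivative `∂ᵢ v (x)`. -/
def pgrad {n : ℕ} (v : Euc n → ℝ) (x : Euc n) (i : Fin n) : ℝ :=
  fderiv ℝ v x (EuclideanSpace.single i 1)

/-- Second partial derivative `∂ᵢ∂ⱼ v (x)`. -/
def phess {n : ℕ} (v : Euc n → ℝ) (x : Euc n) (i j : Fin n) : ℝ :=
  fderiv ℝ (fun y => fderiv ℝ v y (EuclideanSpace.single j 1)) x (EuclideanSpace.single i 1)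

/-- The Möbius Hessian
`A[v](x) = e^{-2v(x)} (-∇²v + ∇v ⊗ ∇v - ½ |∇v|² I)` as a matrix. -/
def mobius {n : ℕ} (v : Euc n → ℝ) (x : Euc n) : Matrix (Fin n) (Fin n) ℝ :=
  Real.exp (-2 * v x) • Matrix.of fun i j =>
    - phess v x i j + pgrad v x i * pgrad v x j
      - (1 / 2) * (∑ k, (pgrad v x k) ^ 2) * (if i = j then (1 : ℝ) else 0)

/-- The (unordered, permutation-invariant) eigenvalue tuple of the symmetric matrix `M`
belongs to the (permutation-invariant) set `S`. -/
def EigIn {n : ℕ} (M : Matrix (Fin n) (Fin n) ℝ) (S : Set (Fin n → ℝ)) : Prop :=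
  ∃ hM : M.IsHermitian, hM.eigenvalues ∈ S

/-- Viscosity supersolution of `λ(A[v]) ∈ ∂Γ` in `Ω`, i.e. `λ(A[v]) ∈ closure Γ`
in the viscosity sense (for a real-valued `v`). -/
def Supersol {n : ℕ} (Γ : Set (Fin n → ℝ)) (Ω : Set (Euc n)) (v : Euc n → ℝ) : Prop :=
  ∀ x₀ ∈ Ω, ∀ φ : Euc n → ℝ, ContDiff ℝ 2 φ → φ x₀ = v x₀ →
    (∀ᶠ x in 𝓝[Ω] x₀, φ x ≤ v x) → EigIn (mobius φ x₀) (closure Γ)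

/-- Viscosity subsolution of `λ(A[v]) ∈ ∂Γ` in `Ω`, i.e. `λ(A[v]) ∈ ℝⁿ ∖ Γ`
in the viscosity sense (for a real-valued `v`). -/
def Subsol {n : ℕ} (Γ : Set (Fin n → ℝ)) (Ω : Set (Euc n)) (v : Euc n → ℝ) : Prop :=
  ∀ x₀ ∈ Ω, ∀ φ : Euc n → ℝ, ContDiff ℝ 2 φ → φ x₀ = v x₀ →
    (∀ᶠ x in 𝓝[Ω] x₀, v x ≤ φ x) → EigIn (mobius φ x₀) Γᶜ


/-- Viscosity supersolution of `λ(A[v]) ∈ ∂Γ` in `Ω`, i.e. `λ(A[v]) ∈ closure Γ` in the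
viscosity sense, for an extended-real-valued `v`. -/
def SupersolE {n : ℕ} (Γ : Set (Fin n → ℝ)) (Ω : Set (Euc n)) (v : Euc n → EReal) : Prop :=
  ∀ x₀ ∈ Ω, ∀ φ : Euc n → ℝ, ContDiff ℝ 2 φ → (φ x₀ : EReal) = v x₀ →
    (∀ᶠ x in 𝓝[Ω] x₀, (φ x : EReal) ≤ v x) → EigIn (mobius φ x₀) (closure Γ)

/-- Viscosity subsolution of `λ(A[v]) ∈ ∂Γ` in `Ω`, i.e. `λ(A[v]) ∈ ℝⁿ ∖ Γ` in the
viscosity sense, for an extended-real-valued `v`. -/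
def SubsolE {n : ℕ} (Γ : Set (Fin n → ℝ)) (Ω : Set (Euc n)) (v : Euc n → EReal) : Prop :=
  ∀ x₀ ∈ Ω, ∀ φ : Euc n → ℝ, ContDiff ℝ 2 φ → (φ x₀ : EReal) = v x₀ →
    (∀ᶠ x in 𝓝[Ω] x₀, v x ≤ (φ x : EReal)) → EigIn (mobius φ x₀) Γᶜ

/-- `v` is lowerconical at `x₀ ∈ Ω` (Caffarelli–Li–Nirenberg): either `v x₀ = +∞`, or
`v x₀ < +∞` and for every `ε > 0` and every smooth `η`,
`inf_{x ∈ Ω} ((v-η)(x) - (v-η)(x₀) - ε|x-x₀|) < 0`. -/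
def LowerConical {n : ℕ} (Ω : Set (Euc n)) (v : Euc n → EReal) (x₀ : Euc n) : Prop :=
  v x₀ = ⊤ ∨ (v x₀ ≠ ⊤ ∧ ∀ ε : ℝ, 0 < ε → ∀ η : Euc n → ℝ, ContDiff ℝ (⊤ : ℕ∞) η →
    ∃ x ∈ Ω, v x - (η x : EReal) <
      v x₀ - (η x₀ : EReal) + ((ε * ‖x - x₀‖ : ℝ) : EReal))

/-- `v` is upperconical at `x₀ ∈ Ω` iff `-v` is lowerconical at `x₀`. -/
def UpperConical {n : ℕ} (Ω : Set (Euc n)) (v : Euc n → EReal) (x₀ : Euc n) : Prop :=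
  LowerConical Ω (fun x => -(v x)) x₀


theorem aux_eig {n : ℕ} (hn : 2 ≤ n) (Γ : Set (Fin n → ℝ)) (hΓ : CondC Γ)
    (δ : ℝ) (hδ : (fun i => lamStar n i - δ) ∈ Γ) (hδ0 : 0 < δ)
    (M : Matrix (Fin n) (Fin n) ℝ) (hM : M.IsHermitian) (y : Fin n → ℝ)
    (e T κ : ℝ) (he : 0 < e) (hT : 0 < T)
    (hMe : ∀ i j, M i j = e * ((if i = j then -T else 0) + κ * (y i * y j)))
    (hr : (1 - δ) * T < -T + κ * ∑ i, y i ^ 2) (hδ1 : δ < 1) :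
    hM.eigenvalues ∈ Γ := by
  obtain ⟨-, -, -, hsym, hcone, hadd⟩ := hΓ
  set S := ∑ i, y i ^ 2 with hS
  have hκS : 0 < κ * S := by nlinarith
  have hS0 : S ≠ 0 := by rintro h; simp [h] at hκS
  have hκ0 : κ ≠ 0 := by rintro h; simp [h] at hκS
  have key : ∀ i, hM.eigenvalues i = -(e * T) ∨ hM.eigenvalues i = e * (-T + κ * S) := by
    intro i
    have h := hM.mulVec_eigenvectorBasis i
    set u : Fin n → ℝ := (hM.eigenvectorBasis i).ofLp with hu
    set l := hM.eigenvalues i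
    have hune : u ≠ 0 := by
      intro h0
      have := hM.eigenvectorBasis.orthonormal.ne_zero i
      apply this
      ext k
      exact congrFun h0 k
    have hk : ∀ k, e * (-T * u k + κ * y k * ∑ j, y j * u j) = l * u k := by
      intro k
      have := congrFun h k
      simp only [Matrix.mulVec, dotProduct, Pi.smul_apply, smul_eq_mul] at this
      rw [← this]
      simp only [hMe, mul_add, add_mul, Finset.sum_add_distrib, Finset.mul_sum]
      congr 1
      · simp [Finset.sum_ite_eq]
        try ring
      · apply Finset.sum_congr rfl
        intros; ring
    set d := ∑ j, y j * u j with hd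
    by_cases hl : l = -(e*T)
    · exact Or.inl hl
    right
    have hd2 : e * (-T * d + κ * S * d) = l * d := by
      have : ∑ k, y k * (e * (-T * u k + κ * y k * d)) = ∑ k, y k * (l * u k) :=
        Finset.sum_congr rfl fun k _ => by rw [hk k]
      have h1 : ∑ k, y k * (e * (-T * u k + κ * y k * d)) = e * (-T * d + κ * S * d) := by
        rw [hd, hS]
        simp only [mul_add, Finset.sum_add_distrib, Finset.mul_sum, Finset.sum_mul]
        congr 1
        · apply Finset.sum_congr rfl; intros; ring
        · rw [Finset.sum_comm]
          apply Finset.sum_congr rfl; intros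
          apply Finset.sum_congr rfl; intros; ring
      have h2 : ∑ k, y k * (l * u k) = l * d := by
        rw [hd, Finset.mul_sum]; apply Finset.sum_congr rfl; intros; ring
      rw [← h1, ← h2, this]
    have hdne : d ≠ 0 := by
      intro h0
      apply hune
      ext k
      have := hk k
      rw [h0] at this
      have h3 : (l + e * T) * u k = 0 := by linarith
      rcases mul_eq_zero.1 h3 with h4 | h4
      · exact absurd (by linarith) hl
      · exact h4
    apply mul_right_cancel₀ hdne
    linarith
  have htr : ∑ i, (hM.eigenvalues i + e * T) = e * (κ * S) := by
    have h1 := hM.trace_eq_sum_eigenvalues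
    simp only [Matrix.trace, Matrix.diag, hMe, RCLike.ofReal_real_eq_id, id] at h1
    rw [Finset.sum_add_distrib, ← h1, hS]
    simp [Finset.mul_sum, mul_add, Finset.sum_add_distrib]
    ring_nf
  have hpos : 0 < e * (κ * S) := by positivity
  obtain ⟨i0, hi0⟩ : ∃ i0, hM.eigenvalues i0 = e * (-T + κ * S) := by
    by_contra hcon
    push Not at hcon
    have : ∀ i, hM.eigenvalues i + e * T = 0 := fun i => by
      rcases key i with h | h
      · linarith
      · exact absurd h (hcon i)
    simp [this] at htr
    rcases htr with h | h | h
    · exact he.ne' h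
    · exact hκ0 h
    · exact hS0 h
  have hother : ∀ i, i ≠ i0 → hM.eigenvalues i = -(e*T) := by
    intro i hi
    rcases key i with h | h
    · exact h
    exfalso
    have hle : ∑ k ∈ {i, i0}, (hM.eigenvalues k + e * T) ≤ ∑ k, (hM.eigenvalues k + e * T) := by
      apply Finset.sum_le_sum_of_subset_of_nonneg (Finset.subset_univ _)
      intro k _ _
      rcases key k with h | h <;> rw [h] <;> linarith
    rw [Finset.sum_pair hi, h, hi0, htr] at hle
    linarith
  have hz : 0 < n := by omega
  let z : Fin n := ⟨0, hz⟩
  have heT : 0 < e * T := by positivity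
  have hmu : (fun i => hM.eigenvalues (Equiv.swap z i0 i) / (e * T) - (lamStar n i - δ)) ∈ GammaN n := by
    intro i
    by_cases hi : i = z
    · subst hi
      simp only [Equiv.swap_apply_left, hi0, lamStar, z, if_true]
      have : 1 - δ < e * (-T + κ * S) / (e * T) := by
        rw [lt_div_iff₀ heT]
        nlinarith
      linarith
    · have h1 : Equiv.swap z i0 i ≠ i0 := by
        intro h
        apply hi
        have := congrArg (Equiv.swap z i0) h
        simpa using this
      have h2 : (i : ℕ) ≠ 0 := fun h => hi (Fin.ext h)
      simp only [hother _ h1, lamStar, if_neg h2]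
      rw [neg_div, div_self heT.ne']
      linarith
  have h1 := hadd _ hδ _ hmu
  have h2 := hcone _ h1 (e * T) heT
  have h3 := hsym (Equiv.swap z i0) _ h2
  convert h3 using 1
  ext i
  simp
  field_simp
  ring

theorem aux_delta {n : ℕ} (Γ : Set (Fin n → ℝ)) (hΓ : CondC Γ)
    (hstar : lamStar n ∈ Γ) : ∃ δ : ℝ, 0 < δ ∧ δ < 1 ∧ (fun i => lamStar n i - δ) ∈ Γ := by
  have hc : Continuous (fun δ : ℝ => (fun i => lamStar n i - δ)) := by fun_prop
  have h0 : ∀ᶠ δ in 𝓝 (0:ℝ), (fun i => lamStar n i - δ) ∈ Γ :=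
    hc.continuousAt.eventually_mem (hΓ.2.2.1.mem_nhds (by simpa using hstar))
  have h1 : ∀ᶠ δ in 𝓝[>] (0:ℝ), δ < 1 := by
    apply mem_nhdsWithin_of_mem_nhds
    exact Iio_mem_nhds one_pos
  obtain ⟨δ, ⟨h, h'⟩, h''⟩ := ((h0.filter_mono nhdsWithin_le_nhds).and h1).and self_mem_nhdsWithin |>.exists
  exact ⟨δ, h'', h', h⟩

theorem aux_grad {n : ℕ} (x0 y : Euc n) (a b C s : ℝ) (j : Fin n) :
    fderiv ℝ (fun x : Euc n => a + b * (‖x - x0‖^2 - s) + C * (‖x - x0‖^2 - s)^2) y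
      (EuclideanSpace.single j 1) = (2 * b + 4 * C * (‖y - x0‖^2 - s)) * (y j - x0 j) := by
  have h1 : HasFDerivAt (fun x : Euc n => ‖x - x0‖^2) _ y :=
    ((hasFDerivAt_id y).sub_const x0).norm_sq
  have h2 := h1.sub_const s
  have h3 := ((h2.const_mul b).const_add a).add ((h2.pow 2).const_mul C)
  have h4 := h3.fderiv
  have h5 : (fun x : Euc n => a + b * (‖x - x0‖^2 - s) + C * (‖x - x0‖^2 - s)^2) = ((fun x : Euc n => a + b * (‖x - x0‖^2 - s)) + fun x => C * (‖x - x0‖^2 - s)^2) := rfl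
  rw [h5, h4]
  simp [EuclideanSpace.inner_single_right]
  ring

theorem aux_hess {n : ℕ} (x0 y : Euc n) (b C s : ℝ) (i j : Fin n) :
    fderiv ℝ (fun y : Euc n => (2 * b + 4 * C * (‖y - x0‖^2 - s)) * (y j - x0 j)) y
      (EuclideanSpace.single i 1) = (2 * b + 4 * C * (‖y - x0‖^2 - s)) * (if i = j then 1 else 0)
       + 8 * C * ((y i - x0 i) * (y j - x0 j)) := by
  have h1 : HasFDerivAt (fun x : Euc n => ‖x - x0‖^2) _ y :=
    ((hasFDerivAt_id y).sub_const x0).norm_sq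
  have h2 := ((h1.sub_const s).const_mul (4 * C)).const_add (2 * b)
  have h6 : HasFDerivAt (fun x : Euc n => x j - x0 j) (EuclideanSpace.proj j : Euc n →L[ℝ] ℝ) y :=
    (EuclideanSpace.proj j : Euc n →L[ℝ] ℝ).hasFDerivAt.sub_const _
  have h3 := h2.mul h6
  have h4 := h3.fderiv
  have h5 : (fun y : Euc n => (2 * b + 4 * C * (‖y - x0‖^2 - s)) * (y j - x0 j)) = ((fun y : Euc n => (2 * b + 4 * C * (‖y - x0‖^2 - s))) * fun y => (y j - x0 j)) := rfl
  rw [h5, h4]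
  simp [EuclideanSpace.inner_single_right, eq_comm]
  ring

theorem aux_mobius {n : ℕ} (x0 y : Euc n) (a b C s : ℝ) (hs : ‖y - x0‖^2 = s) (i j : Fin n) :
    mobius (fun x : Euc n => a + b * (‖x - x0‖^2 - s) + C * (‖x - x0‖^2 - s)^2) y i j
     = Real.exp (-2 * a) * ((if i = j then -(2 * b + 2 * b^2 * s) else 0)
        + (4 * b^2 - 8 * C) * ((y i - x0 i) * (y j - x0 j))) := by
  have hsum : ∑ k, (y k - x0 k)^2 = s := by
    rw [← hs, EuclideanSpace.norm_sq_eq]; simp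
  simp only [mobius, Matrix.smul_apply, Matrix.of_apply, phess, pgrad, aux_grad, aux_hess, hs, smul_eq_mul,
    mul_pow, ← Finset.mul_sum, hsum]
  split_ifs <;> simp <;> ring

theorem aux_taylor (β c s : ℝ) (hs : 0 < s) (hβ : 0 < β) (hc : 0 < c) (hD : 0 < 1 - c * s ^ β) :
    ∃ b C : ℝ, s * b = (c * s ^ β) / (1 - c * s ^ β) ∧
      2 * C * s^2 = (2 * β - 1) * ((c * s ^ β) / (1 - c * s ^ β)) +
        2 * β * ((c * s ^ β) / (1 - c * s ^ β))^2 ∧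
      ∀ᶠ t in 𝓝 s, -(1/β) * Real.log (1 - c * t ^ β) ≤
        -(1/β) * Real.log (1 - c * s ^ β) + b * (t - s) + C * (t - s)^2 := by
  set Q := (c * s ^ β) / (1 - c * s ^ β) with hQ
  have hQ0 : 0 < Q := by positivity
  refine ⟨Q / s, ((2 * β - 1) * Q + 2 * β * Q^2) / (2 * s^2), by field_simp, by field_simp, ?_⟩
  set b := Q / s
  set C := ((2 * β - 1) * Q + 2 * β * Q^2) / (2 * s^2) with hC
  set g : ℝ → ℝ := fun t => -(1/β) * Real.log (1 - c * s ^ β) + b * (t - s) + C * (t - s)^2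
     - (-(1/β) * Real.log (1 - c * t ^ β)) with hg
  have hev : ∀ᶠ t in 𝓝 s, 0 < t ∧ 0 < 1 - c * t ^ β := by
    refine (lt_mem_nhds hs).and ?_
    have : ContinuousAt (fun t : ℝ => 1 - c * t ^ β) s := by
      have := Real.continuousAt_rpow_const s β (Or.inl hs.ne')
      fun_prop
    exact this.eventually (lt_mem_nhds hD)
  have hder : ∀ t, 0 < t → 0 < 1 - c * t ^ β →
      HasDerivAt g (b + 2 * C * (t - s) - (c * t ^ (β-1)) / (1 - c * t ^ β)) t := by
    intro t ht hDt
    have h1 := ((Real.hasDerivAt_rpow_const (x := t) (p := β) (Or.inl ht.ne')).const_mul c).const_sub 1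
    have h2 := (h1.log hDt.ne').const_mul (-(1/β))
    have h3 := (hasDerivAt_id t).sub_const s
    have h4 := (((h3.const_mul b).const_add (-(1/β) * Real.log (1 - c * s ^ β))).add ((h3.pow 2).const_mul C)).sub h2
    refine h4.congr_deriv ?_
    simp
    field_simp
    try ring
  have hder2 : HasDerivAt (fun t => b + 2 * C * (t - s) - (c * t ^ (β-1)) / (1 - c * t ^ β))
     (2 * C - ((β - 1) * Q + β * Q^2) / s^2) s := by
    have h1 := ((Real.hasDerivAt_rpow_const (x := s) (p := β) (Or.inl hs.ne')).const_mul c).const_sub 1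
    have h2 := ((Real.hasDerivAt_rpow_const (x := s) (p := β - 1) (Or.inl hs.ne')).const_mul c)
    have h3 := (hasDerivAt_id s).sub_const s
    have h4 := ((h3.const_mul (2*C)).const_add b).sub (h2.div h1 hD.ne')
    refine h4.congr_deriv ?_
    have e1 : s ^ (β - 1) = s ^ β / s := by rw [Real.rpow_sub hs, Real.rpow_one]
    have e2 : s ^ (β - 1 - 1) = s ^ β / s^2 := by
      rw [Real.rpow_sub hs, e1, Real.rpow_one]; field_simp
    rw [e1, e2, hQ]
    field_simp
    ring
  have hdg : deriv g =ᶠ[𝓝 s] (fun t => b + 2 * C * (t - s) - (c * t ^ (β-1)) / (1 - c * t ^ β)) := by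
    filter_upwards [hev] with t ht using (hder t ht.1 ht.2).deriv
  have hmin : IsLocalMin g s := by
    apply isLocalMin_of_deriv_deriv_pos
    · rw [hdg.deriv_eq, hder2.deriv, hC]
      have : 2 * (((2 * β - 1) * Q + 2 * β * Q ^ 2) / (2 * s ^ 2)) - ((β - 1) * Q + β * Q ^ 2) / s ^ 2
        = β * (Q + Q^2) / s^2 := by field_simp; ring
      rw [this]; positivity
    · rw [hdg.eq_of_nhds]
      have e1 : s ^ (β - 1) = s ^ β / s := by rw [Real.rpow_sub hs, Real.rpow_one]
      simp only [e1, b, hQ]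
      field_simp
      simp
    · exact (hder s hs hD).continuousAt
  filter_upwards [hmin] with t ht
  have h0 : g s = 0 := by simp [hg]
  rw [h0] at ht
  simp only [hg] at ht
  linarith

theorem aux_barrier {n : ℕ} (hn : 2 ≤ n) (Γ : Set (Fin n → ℝ)) (hΓ : CondC Γ)
    (δ : ℝ) (hδ : (fun i => lamStar n i - δ) ∈ Γ) (hδ0 : 0 < δ) (hδ1 : δ < 1)
    (v : Euc n → EReal) (husc : UpperSemicontinuous v)
    (hne : ∀ x, v x < ⊤) (hsub : SubsolE Γ Set.univ v)
    (β : ℝ) (hβ : β = δ / 8) (c : ℝ) (hc : 0 < c) (x0 x1 : Euc n)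
    (hx1 : c * (‖x1 - x0‖ ^ 2) ^ β < 1) :
    v x1 ≤ v x0 + ((-(1/β) * Real.log (1 - c * (‖x1 - x0‖ ^ 2) ^ β) : ℝ) : EReal) := by
  have hβ0 : 0 < β := by rw [hβ]; positivity
  by_contra hcon
  push Not at hcon
  set f1 := -(1/β) * Real.log (1 - c * (‖x1 - x0‖ ^ 2) ^ β) with hf1
  obtain ⟨m, hm⟩ : ∃ m : ℝ, v x1 = m :=
    ⟨(v x1).toReal, (EReal.coe_toReal (hne x1).ne (ne_bot_of_gt hcon)).symm⟩
  set P : Euc n → ℝ := fun x => c * (‖x - x0‖ ^ 2) ^ β with hP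
  have hPc : Continuous P := by
    have : Continuous (fun t : ℝ => t ^ β) := Real.continuous_rpow_const hβ0.le
    fun_prop
  have hKc : ∀ q, IsCompact {x | P x ≤ q} := by
    intro q
    apply Metric.isCompact_of_isClosed_isBounded (isClosed_le hPc continuous_const)
    apply (Metric.isBounded_closedBall (x := x0) (r := (|q| / c) ^ (1 / (2 * β)))).subset
    intro x hx
    rw [mem_closedBall, dist_eq_norm]
    have h1 : ‖x - x0‖ ^ (2 * β) ≤ |q| / c := by
      rw [le_div_iff₀ hc, Real.rpow_mul (norm_nonneg _), mul_comm]
      have : P x ≤ |q| := le_trans hx (le_abs_self q)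
      simpa [hP] using this
    have h2 := Real.rpow_le_rpow (by positivity) h1 (by positivity : 0 ≤ 1 / (2 * β))
    rwa [← Real.rpow_mul (norm_nonneg _), mul_one_div_cancel (by positivity), Real.rpow_one] at h2
  obtain ⟨xM, hxM, hmaxM⟩ := (husc.upperSemicontinuousOn {x | P x ≤ 1}).exists_isMaxOn
    ⟨x1, hx1.le⟩ (hKc 1)
  have hxMge : v x1 ≤ v xM := hmaxM (show P x1 ≤ 1 from hx1.le)
  obtain ⟨N, hN⟩ : ∃ N : ℝ, v xM = N :=
    ⟨(v xM).toReal, (EReal.coe_toReal (hne xM).ne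
      (ne_bot_of_gt (lt_of_lt_of_le hcon hxMge))).symm⟩
  have hNm : m ≤ N := by rw [hm, hN] at hxMge; exact_mod_cast hxMge
  set L := N - m + f1 + 1 with hL
  set q := 1 - Real.exp (-β * L) with hq
  have hq1 : q < 1 := by have := Real.exp_pos (-β * L); linarith
  have hx1q : P x1 < q := by
    have h1 : Real.exp (-β * L) < 1 - P x1 := by
      rw [← Real.lt_log_iff_exp_lt (by simp only [hP]; linarith)]
      have : f1 < L := by linarith
      have h2 : -β * f1 = Real.log (1 - P x1) := by rw [hf1]; field_simp; rfl
      rw [← h2]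
      nlinarith
    linarith
  set f : Euc n → ℝ := fun x => -(1/β) * Real.log (1 - P x) with hf
  have hgusc : UpperSemicontinuousOn (fun x => v x + ((-f x : ℝ) : EReal)) {x | P x ≤ q} := by
    apply (husc.upperSemicontinuousOn _).add'
    · apply ContinuousOn.upperSemicontinuousOn
      apply continuous_coe_real_ereal.comp_continuousOn
      apply ContinuousOn.neg
      apply ContinuousOn.mul continuousOn_const
      apply ContinuousOn.log (by fun_prop)
      intro x hx
      have : P x ≤ q := hx
      linarith
    · intro x hx
      apply EReal.continuousAt_add
      · exact Or.inl (hne x).ne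
      · exact Or.inr (EReal.coe_ne_top _)
  obtain ⟨xh, hxh, hmax⟩ := hgusc.exists_isMaxOn ⟨x1, hx1q.le⟩ (hKc q)
  have hxhq : P xh ≤ q := hxh
  have hge : v x1 + ((-f x1 : ℝ) : EReal) ≤ v xh + ((-f xh : ℝ) : EReal) :=
    hmax (show P x1 ≤ q from hx1q.le)
  have hvb : v xh ≠ ⊥ := by
    intro h
    rw [h, hm, EReal.bot_add, ← EReal.coe_add] at hge
    exact EReal.coe_ne_bot _ (le_bot_iff.1 hge)
  obtain ⟨a, ha⟩ : ∃ a : ℝ, v xh = a :=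
    ⟨(v xh).toReal, (EReal.coe_toReal (hne xh).ne hvb).symm⟩
  have hge' : m - f1 ≤ a - f xh := by
    rw [hm, ha, ← EReal.coe_add, ← EReal.coe_add] at hge
    have := EReal.coe_le_coe_iff.1 hge
    change m + -f1 ≤ a + - f xh at this
    linarith
  have hxne : xh ≠ x0 := by
    intro h
    have hf0 : f xh = 0 := by simp [hf, hP, h, hβ0.ne']
    rw [← h, ha, hm, ← EReal.coe_add] at hcon
    have := EReal.coe_lt_coe_iff.1 hcon
    linarith
  have hxlt : P xh < q := by
    rcases hxhq.lt_or_eq with h | h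
    · exact h
    exfalso
    have hfL : f xh = L := by
      simp only [hf, h, hq]
      rw [sub_sub_cancel, Real.log_exp]
      field_simp
    have h1 : v xh ≤ v xM := hmaxM (show P xh ≤ 1 by linarith)
    rw [ha, hN] at h1
    have := EReal.coe_le_coe_iff.1 h1
    linarith
  set s := ‖xh - x0‖ ^ 2 with hs
  have hs0 : 0 < s := by
    have : 0 < ‖xh - x0‖ := norm_pos_iff.2 (sub_ne_zero.2 hxne)
    positivity
  have hD : 0 < 1 - c * s ^ β := by
    have : c * s ^ β < q := hxlt
    linarith
  obtain ⟨b, C, hb, hC, htay⟩ := aux_taylor β c s hs0 hβ0 hc hD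
  have hQ0 : 0 < c * s ^ β / (1 - c * s ^ β) := by positivity
  rw [← hb] at hQ0 hC
  set Q := s * b with hQ
  have hb0 : 0 < b := (mul_pos_iff_of_pos_left hs0).1 hQ0
  have hcont : Tendsto (fun x : Euc n => ‖x - x0‖ ^ 2) (𝓝 xh) (𝓝 s) := by
    have : Continuous (fun x : Euc n => ‖x - x0‖ ^ 2) := by fun_prop
    exact this.tendsto xh
  have hH := hsub xh (mem_univ _)
    (fun x : Euc n => a + b * (‖x - x0‖^2 - s) + C * (‖x - x0‖^2 - s)^2)
    (by
      have : ContDiff ℝ 2 (fun x : Euc n => ‖x - x0‖^2) := (contDiff_id.sub contDiff_const).norm_sq ℝ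
      fun_prop)
    (by rw [ha]; simp [hs])
    (by
      rw [nhdsWithin_univ]
      filter_upwards [hcont.eventually htay, hPc.continuousAt.eventually (gt_mem_nhds hxlt)] with x hx hxq
      have h1 : v x + ((-f x : ℝ) : EReal) ≤ v xh + ((-f xh : ℝ) : EReal) :=
        hmax (show P x ≤ q from le_of_lt hxq)
      by_cases hxb : v x = ⊥
      · rw [hxb]; exact bot_le
      have h2 := (EReal.coe_toReal (hne x).ne hxb).symm
      rw [h2, ha, ← EReal.coe_add, ← EReal.coe_add] at h1
      have h3 := EReal.coe_le_coe_iff.1 h1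
      rw [h2]
      apply EReal.coe_le_coe_iff.2
      change f x ≤ f xh + b * (‖x - x0‖^2 - s) + C * (‖x - x0‖^2 - s)^2 at hx
      linarith)
  obtain ⟨hM, hnot⟩ := hH
  apply hnot
  refine aux_eig hn Γ hΓ δ hδ hδ0 _ hM (fun i => xh i - x0 i) (Real.exp (-2 * a))
    (2 * b + 2 * b^2 * s) (4 * b^2 - 8 * C) (Real.exp_pos _) (by positivity)
    (fun i j => aux_mobius x0 xh a b C s hs.symm i j) ?_ hδ1
  have hsum : ∑ k, (xh k - x0 k)^2 = s := by
    rw [hs, EuclideanSpace.norm_sq_eq]; simp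
  rw [hsum]
  have h1 : (2 * b + 2 * b^2 * s) * s = 2 * (Q + Q^2) := by rw [hQ]; ring
  have h2 : ((4 * b^2 - 8 * C) * s) * s = 4 * Q^2 - 4 * ((2 * β - 1) * Q + 2 * β * Q ^ 2) := by
    rw [← hC, hQ]; ring
  have h3 : (1 - δ) * (2 * (Q + Q^2)) < - (2 * (Q + Q^2)) + (4 * Q^2 - 4 * ((2 * β - 1) * Q + 2 * β * Q ^ 2)) := by
    have h4 : - (2 * (Q + Q^2)) + (4 * Q^2 - 4 * ((2 * β - 1) * Q + 2 * β * Q ^ 2))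
        - (1 - δ) * (2 * (Q + Q^2)) = δ * (Q + Q^2) := by rw [hβ]; ring
    have : 0 < δ * (Q + Q^2) := by positivity
    linarith
  rw [← h1, ← h2] at h3
  apply lt_of_mul_lt_mul_right _ hs0.le
  linarith

theorem aux_le {n : ℕ} (hn : 2 ≤ n) (Γ : Set (Fin n → ℝ)) (hΓ : CondC Γ)
    (hstar : lamStar n ∈ Γ)
    (v : Euc n → EReal) (husc : UpperSemicontinuous v)
    (hne : ∀ x, v x < ⊤) (hsub : SubsolE Γ Set.univ v) (x0 x1 : Euc n) : v x1 ≤ v x0 := by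
  obtain ⟨δ, hδ0, hδ1, hδ⟩ := aux_delta Γ hΓ hstar
  set K := (‖x1 - x0‖ ^ 2) ^ (δ / 8)
  have hcc : Tendsto (fun c : ℝ => c * K) (𝓝[>] 0) (𝓝 0) := by
    have : Continuous (fun c : ℝ => c * K) := by fun_prop
    simpa using (this.tendsto 0).mono_left nhdsWithin_le_nhds
  have hev : ∀ᶠ c in 𝓝[>] (0:ℝ), c * K < 1 := hcc.eventually (gt_mem_nhds one_pos)
  have hlim : Tendsto (fun c : ℝ => ((-(1/(δ/8)) * Real.log (1 - c * K) : ℝ) : EReal))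
      (𝓝[>] 0) (𝓝 ((0 : ℝ) : EReal)) := by
    apply (continuous_coe_real_ereal.tendsto _).comp
    have h1 : Tendsto (fun c : ℝ => 1 - c * K) (𝓝[>] 0) (𝓝 1) := by
      simpa using hcc.const_sub 1
    have h2 := ((Real.continuousAt_log one_ne_zero).tendsto.comp h1).const_mul (-(1/(δ/8)))
    simpa using h2
  have hlim2 : Tendsto (fun c : ℝ => v x0 + ((-(1/(δ/8)) * Real.log (1 - c * K) : ℝ) : EReal))
      (𝓝[>] 0) (𝓝 (v x0)) := by
    have h3 := (EReal.continuousAt_add (p := (v x0, ((0:ℝ):EReal))) (Or.inl (hne x0).ne)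
      (Or.inr (EReal.coe_ne_top _))).tendsto.comp (tendsto_const_nhds.prodMk_nhds hlim)
    simpa [Function.comp_def] using h3
  apply ge_of_tendsto hlim2
  filter_upwards [hev, self_mem_nhdsWithin] with c hc hc0
  exact aux_barrier hn Γ hΓ δ hδ hδ0 hδ1 v husc hne hsub (δ/8) rfl c hc0 x0 x1 hc

/-- **Liouville theorem for subsolutions** (Theorem 6.2): for `n ≥ 2` and a cone `Γ`
satisfying condition (C) with `λ* ∈ Γ`, every upper semi-continuous `v : ℝⁿ → [-∞, ∞)`,
`v ≢ -∞`, satisfying `λ(A[v]) ∈ ℝⁿ ∖ Γ` on `ℝⁿ` in the viscosity sense is constant. -/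
theorem liouville_subsolutions
    {n : ℕ} (hn : 2 ≤ n) (Γ : Set (Fin n → ℝ)) (hΓ : CondC Γ)
    (hstar : lamStar n ∈ Γ)
    (v : Euc n → EReal) (husc : UpperSemicontinuous v)
    (hne : ∀ x, v x < ⊤) (hnbot : ∃ x, v x ≠ ⊥)
    (hsub : SubsolE Γ Set.univ v) :
    ∀ x y : Euc n, v x = v y := by
  exact fun x y => le_antisymm (aux_le hn Γ hΓ hstar v husc hne hsub y x)
    (aux_le hn Γ hΓ hstar v husc hne hsub x y)
end
end

section
/- Let n ≥ 2 and μ ∈ [0,∞). For λ ∈ ℝⁿ write λ₍₁₎ ≥ λ₍₂₎ ≥ … ≥ λ₍ₙ₎ for the decreasing rearrangement of the coordinates of λ. (a) The cone Γ̂_μ := {λ ∈ ℝⁿ : λ₍₁₎ + μ·λ₍₂₎ > 0} satisfies condition (C), (μ,−1,…,−1) ∈ ∂Γ̂_μ, and every cone Γ satisfying condition (C) with (μ,−1,…,−1) ∈ ∂Γ is contained in Γ̂_μ. (b) The cone Γ̌_μ := {λ ∈ ℝⁿ : λ₍ₙ₎ + μ·λ₍ₙ₋₁₎ > 0} satisfies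 condition (C), (−μ,1,…,1) ∈ ∂Γ̌_μ, and every cone Γ satisfying condition (C) with (−μ,1,…,1) ∈ ∂Γ contains Γ̌_μ. -/
open Filter Topology MeasureTheory Metric Set
open scoped BigOperators ENNReal NNReal

noncomputable section

/-- The decreasing rearrangement of `lam : Fin n → ℝ`: `dsort lam 0 ≥ dsort lam 1 ≥ …`. -/
def dsort {n : ℕ} (lam : Fin n → ℝ) : Fin n → ℝ :=
  fun k => lam (Tuple.sort lam k.rev)

lemma ne_of_val {n : ℕ} {a b : Fin n} (ha : a.val = 0) (hb : b.val = 1) : a ≠ b := by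
  rintro rfl
  omega

def gmax {n : ℕ} (μ : ℝ) (i j : Fin n) (lam : Fin n → ℝ) : ℝ :=
  max (lam i) (lam j) + μ * min (lam i) (lam j)

def gmin {n : ℕ} (μ : ℝ) (i j : Fin n) (lam : Fin n → ℝ) : ℝ :=
  min (lam i) (lam j) + μ * max (lam i) (lam j)

lemma dsort_anti {n : ℕ} (lam : Fin n → ℝ) {k l : Fin n} (h : k ≤ l) :
    dsort lam l ≤ dsort lam k :=
  Tuple.monotone_sort lam (Fin.rev_le_rev.mpr h)

lemma exists_dsort {n : ℕ} (lam : Fin n → ℝ) :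
    ∃ p : Equiv.Perm (Fin n), ∀ k, dsort lam k = lam (p k) :=
  ⟨Fin.revPerm.trans (Tuple.sort lam), fun _ => rfl⟩

/-- the two largest entries -/
lemma top_two {n : ℕ} (a b : Fin n) (ha : a.val = 0) (hb : b.val = 1) (lam : Fin n → ℝ) :
    ∃ i j : Fin n, i ≠ j ∧ dsort lam a = lam i ∧ dsort lam b = lam j ∧
      lam j ≤ lam i ∧ ∀ k, k ≠ i → lam k ≤ lam j := by
  obtain ⟨p, hp⟩ := exists_dsort lam
  refine ⟨p a, p b, ?_, hp _, hp _, ?_, ?_⟩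
  · intro h
    have := congrArg Fin.val (p.injective h)
    omega
  · rw [← hp, ← hp]
    apply dsort_anti
    rw [Fin.le_def]; omega
  · intro k hk
    obtain ⟨l, rfl⟩ := p.surjective k
    rw [← hp, ← hp]
    apply dsort_anti
    have : l ≠ a := fun h => hk (by rw [h])
    have h2 : l.val ≠ 0 := fun h => this (Fin.ext (by omega))
    rw [Fin.le_def]; omega

lemma bot_two {n : ℕ} (a b : Fin n) (ha : a.val + 1 = n) (hb : b.val + 2 = n) (lam : Fin n → ℝ) :
    ∃ i j : Fin n, i ≠ j ∧ dsort lam a = lam i ∧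
      dsort lam b = lam j ∧
      lam i ≤ lam j ∧ ∀ k, k ≠ i → lam j ≤ lam k := by
  obtain ⟨p, hp⟩ := exists_dsort lam
  refine ⟨p a, p b, ?_, hp _, hp _, ?_, ?_⟩
  · intro h
    have := congrArg Fin.val (p.injective h)
    omega
  · rw [← hp, ← hp]
    apply dsort_anti
    rw [Fin.le_def]; omega
  · intro k hk
    obtain ⟨l, rfl⟩ := p.surjective k
    rw [← hp, ← hp]
    apply dsort_anti
    have : l ≠ a := fun h => hk (by rw [h])
    have h2 : l.val + 1 ≠ n := fun h => this (Fin.ext (by omega))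
    have := l.isLt
    rw [Fin.le_def]; omega

lemma hat_iff {n : ℕ} (a b : Fin n) (ha : a.val = 0) (hb : b.val = 1) (μ : ℝ) (hμ : 0 ≤ μ) (lam : Fin n → ℝ) :
    0 < dsort lam a + μ * dsort lam b ↔
      ∃ i j, i ≠ j ∧ 0 < gmax μ i j lam := by
  obtain ⟨i, j, hij, h0, h1, hji, hk⟩ := top_two a b ha hb lam
  rw [h0, h1]
  constructor
  · intro h
    exact ⟨i, j, hij, by rw [gmax, max_eq_left hji, min_eq_right hji]; exact h⟩
  · rintro ⟨c, d, hcd, h⟩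
    have hle : ∀ k, lam k ≤ lam i := fun k => by
      by_cases hki : k = i
      · rw [hki]
      · exact (hk k hki).trans hji
    have hmin : min (lam c) (lam d) ≤ lam j := by
      by_cases hc : c = i
      · exact (min_le_right _ _).trans (hk d (fun hd => hcd (hc.trans hd.symm)))
      · exact (min_le_left _ _).trans (hk c hc)
    have hmax : max (lam c) (lam d) ≤ lam i := max_le (hle c) (hle d)
    have := mul_le_mul_of_nonneg_left hmin hμ
    unfold gmax at h
    linarith

lemma check_iff {n : ℕ} (a b : Fin n) (ha : a.val + 1 = n) (hb : b.val + 2 = n) (μ : ℝ) (hμ : 0 ≤ μ) (lam : Fin n → ℝ) :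
    0 < dsort lam a + μ * dsort lam b ↔
      ∀ i j, i ≠ j → 0 < gmin μ i j lam := by
  obtain ⟨i, j, hij, h0, h1, hji, hk⟩ := bot_two a b ha hb lam
  rw [h0, h1]
  constructor
  · intro h c d hcd
    have hle : ∀ k, lam i ≤ lam k := fun k => by
      by_cases hki : k = i
      · rw [hki]
      · exact hji.trans (hk k hki)
    have hmax : lam j ≤ max (lam c) (lam d) := by
      by_cases hc : c = i
      · exact (hk d (fun hd => hcd (hc.trans hd.symm))).trans (le_max_right _ _)
      · exact (hk c hc).trans (le_max_left _ _)
    have hmin : lam i ≤ min (lam c) (lam d) := le_min (hle c) (hle d)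
    have := mul_le_mul_of_nonneg_left hmax hμ
    unfold gmin
    linarith
  · intro h
    have := h i j hij
    rwa [gmin, max_eq_right hji, min_eq_left hji] at this

lemma gmax_cont {n : ℕ} (μ : ℝ) (i j : Fin n) : Continuous (gmax μ i j) := by
  unfold gmax; fun_prop

lemma gmin_cont {n : ℕ} (μ : ℝ) (i j : Fin n) : Continuous (gmin μ i j) := by
  unfold gmin; fun_prop

lemma gmax_smul {n : ℕ} (μ : ℝ) (i j : Fin n) (lam : Fin n → ℝ) (t : ℝ) (ht : 0 < t) :
    gmax μ i j (t • lam) = t * gmax μ i j lam := by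
  simp only [gmax, Pi.smul_apply, smul_eq_mul, ← mul_max_of_nonneg _ _ ht.le,
    ← mul_min_of_nonneg _ _ ht.le]
  ring

lemma gmin_smul {n : ℕ} (μ : ℝ) (i j : Fin n) (lam : Fin n → ℝ) (t : ℝ) (ht : 0 < t) :
    gmin μ i j (t • lam) = t * gmin μ i j lam := by
  simp only [gmin, Pi.smul_apply, smul_eq_mul, ← mul_max_of_nonneg _ _ ht.le,
    ← mul_min_of_nonneg _ _ ht.le]
  ring

lemma gmax_mono {n : ℕ} (μ : ℝ) (hμ : 0 ≤ μ) (i j : Fin n) {x y : Fin n → ℝ}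
    (h : ∀ k, x k ≤ y k) : gmax μ i j x ≤ gmax μ i j y :=
  add_le_add (max_le_max (h i) (h j)) (mul_le_mul_of_nonneg_left (min_le_min (h i) (h j)) hμ)

lemma gmin_mono {n : ℕ} (μ : ℝ) (hμ : 0 ≤ μ) (i j : Fin n) {x y : Fin n → ℝ}
    (h : ∀ k, x k ≤ y k) : gmin μ i j x ≤ gmin μ i j y :=
  add_le_add (min_le_min (h i) (h j)) (mul_le_mul_of_nonneg_left (max_le_max (h i) (h j)) hμ)

lemma gmax_add {n : ℕ} (μ : ℝ) (i j : Fin n) (x : Fin n → ℝ) (c : ℝ) :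
    gmax μ i j (fun k => x k + c) = gmax μ i j x + (1 + μ) * c := by
  simp only [gmax, max_add_add_right, min_add_add_right]; ring

lemma gmin_add {n : ℕ} (μ : ℝ) (i j : Fin n) (x : Fin n → ℝ) (c : ℝ) :
    gmin μ i j (fun k => x k + c) = gmin μ i j x + (1 + μ) * c := by
  simp only [gmin, max_add_add_right, min_add_add_right]; ring

lemma condC_hat {n : ℕ} (a b : Fin n) (ha : a.val = 0) (hb : b.val = 1) (μ : ℝ) (hμ : 0 ≤ μ) :
    CondC {lam : Fin n → ℝ | ∃ i j, i ≠ j ∧ 0 < gmax μ i j lam} := by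
  refine ⟨⟨fun _ => 1, a, b, ne_of_val ha hb, ?_⟩, ?_, ?_, ?_, ?_, ?_⟩
  · simp [gmax]; linarith
  · intro h
    have : (fun _ => 0 : Fin n → ℝ) ∈ {lam : Fin n → ℝ | ∃ i j, i ≠ j ∧ 0 < gmax μ i j lam} := by
      rw [h]; trivial
    simp [gmax] at this
  · simp only [ne_eq, Set.ofPred_exists, Set.ofPred_and]
    refine isOpen_iUnion fun i => isOpen_iUnion fun j => ?_
    exact isOpen_const.inter (isOpen_lt continuous_const (gmax_cont μ i j))
  · rintro σ lam ⟨i, j, hij, h⟩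
    refine ⟨σ.symm i, σ.symm j, fun h => hij (σ.symm.injective h), ?_⟩
    simpa [gmax] using h
  · rintro lam ⟨i, j, hij, h⟩ t ht
    exact ⟨i, j, hij, by rw [gmax_smul μ i j lam t ht]; positivity⟩
  · rintro lam ⟨i, j, hij, h⟩ m hm
    exact ⟨i, j, hij, h.trans_le (gmax_mono μ hμ i j fun k => by
      have := hm k
      simp only [Pi.add_apply]; linarith)⟩

lemma condC_check {n : ℕ} (a b : Fin n) (ha : a.val = 0) (hb : b.val = 1) (μ : ℝ) (hμ : 0 ≤ μ) :
    CondC {lam : Fin n → ℝ | ∀ i j, i ≠ j → 0 < gmin μ i j lam} := by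
  refine ⟨⟨fun _ => 1, ?_⟩, ?_, ?_, ?_, ?_, ?_⟩
  · intro i j _
    simp [gmin]; linarith
  · intro h
    have : (fun _ => 0 : Fin n → ℝ) ∈ {lam : Fin n → ℝ | ∀ i j, i ≠ j → 0 < gmin μ i j lam} := by
      rw [h]; trivial
    have := this a b (ne_of_val ha hb)
    simp [gmin] at this
  · simp only [Set.ofPred_forall]
    refine isOpen_iInter_of_finite fun i => isOpen_iInter_of_finite fun j =>
      isOpen_iInter_of_finite fun _ => ?_
    exact (isOpen_lt continuous_const (gmin_cont μ i j))
  · intro σ lam h i j hij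
    exact h (σ i) (σ j) (fun h => hij (σ.injective h))
  · intro lam h t ht i j hij
    rw [gmin_smul μ i j lam t ht]
    exact mul_pos ht (h i j hij)
  · intro lam h m hm i j hij
    exact (h i j hij).trans_le (gmin_mono μ hμ i j fun k => by
      have := hm k
      simp only [Pi.add_apply]; linarith)

lemma tendsto_add_const {n : ℕ} (x : Fin n → ℝ) :
    Tendsto (fun e : ℝ => (fun k => x k + e : Fin n → ℝ)) (𝓝 0) (𝓝 x) := by
  have : Continuous (fun e : ℝ => (fun k => x k + e : Fin n → ℝ)) := by fun_prop
  have := this.tendsto 0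
  simpa using this

lemma mem_closure_of_add {n : ℕ} {S : Set (Fin n → ℝ)} {x : Fin n → ℝ}
    (h : ∀ e : ℝ, 0 < e → (fun k => x k + e : Fin n → ℝ) ∈ S) : x ∈ closure S := by
  refine mem_closure_of_tendsto ((tendsto_add_const x).mono_left
    (nhdsWithin_le_nhds (s := Ioi 0))) ?_
  filter_upwards [self_mem_nhdsWithin] with e he using h e he

lemma exists_sub_mem {n : ℕ} {S : Set (Fin n → ℝ)} (hS : IsOpen S) {x : Fin n → ℝ}
    (hx : x ∈ S) : ∃ e : ℝ, 0 < e ∧ (fun k => x k - e : Fin n → ℝ) ∈ S := by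
  have h1 : ∀ᶠ e : ℝ in 𝓝 0, (fun k => x k + e : Fin n → ℝ) ∈ S :=
    (tendsto_add_const x).eventually (hS.mem_nhds hx)
  obtain ⟨e, he, h⟩ := ((h1.filter_mono (nhdsWithin_le_nhds (s := Iio 0))).and
    self_mem_nhdsWithin).exists
  refine ⟨-e, by simpa using h, by simpa using he⟩

lemma CondC.mono_lt {n : ℕ} {Γ : Set (Fin n → ℝ)} (hΓ : CondC Γ) {x y : Fin n → ℝ}
    (hx : x ∈ Γ) (h : ∀ k, x k < y k) : y ∈ Γ := by
  have := hΓ.2.2.2.2.2 x hx (y - x) (fun k => by simpa using h k)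
  simpa using this

lemma CondC.mono_le {n : ℕ} {Γ : Set (Fin n → ℝ)} (hΓ : CondC Γ) {x y : Fin n → ℝ}
    (hx : x ∈ Γ) (h : ∀ k, x k ≤ y k) : y ∈ Γ := by
  obtain ⟨e, he, h1⟩ := exists_sub_mem hΓ.2.2.1 hx
  exact hΓ.mono_lt h1 fun k => by linarith [h k]

lemma CondC.mono_closure {n : ℕ} {Γ : Set (Fin n → ℝ)} (hΓ : CondC Γ) {x y : Fin n → ℝ}
    (hx : x ∈ closure Γ) (h : ∀ k, x k < y k) : y ∈ Γ := by
  have ho : IsOpen {z : Fin n → ℝ | ∀ k, z k < y k} := by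
    simp only [Set.ofPred_forall]
    exact isOpen_iInter_of_finite fun k => isOpen_lt (continuous_apply k) continuous_const
  obtain ⟨z, hz, hzΓ⟩ := mem_closure_iff.mp hx _ ho h
  exact hΓ.mono_lt hzΓ hz

lemma hat_max {n : ℕ} (a b : Fin n) (ha : a.val = 0) (hb : b.val = 1) (μ : ℝ) (hμ : 0 ≤ μ) (Γ : Set (Fin n → ℝ)) (hΓ : CondC Γ)
    (hv : (fun i : Fin n => if i.val = 0 then μ else -1) ∉ Γ) (lam : Fin n → ℝ) (hl : lam ∈ Γ) :
    0 < dsort lam a + μ * dsort lam b := by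
  obtain ⟨i, j, hij, h0, h1, hji, hk⟩ := top_two a b ha hb lam
  rw [h0, h1]
  by_contra! hc
  obtain ⟨e, he, hle⟩ := exists_sub_mem hΓ.2.2.1 hl
  have hj : lam j ≤ 0 := by
    by_contra! hj
    have := mul_nonneg hμ hj.le
    linarith
  have ht : 0 < e - lam j := by linarith
  apply hv
  have h3 := hΓ.2.2.2.2.1 _ (hΓ.2.2.2.1 (Equiv.swap a i) _ hle) _ (inv_pos.mpr ht)
  refine hΓ.mono_le h3 fun k => ?_
  simp only [Pi.smul_apply, Function.comp, smul_eq_mul]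
  rw [inv_mul_le_iff₀ ht]
  split_ifs with h
  · have : k = a := Fin.ext (by omega)
    rw [this, Equiv.swap_apply_left]
    have := mul_nonneg hμ he.le
    linarith
  · have : Equiv.swap a i k ≠ i := by
      intro h'
      apply h
      rw [Equiv.swap_apply_eq_iff, Equiv.swap_apply_right] at h'
      rw [h']; omega
    have := hk _ this
    linarith

lemma check_min {n : ℕ} (z a b : Fin n) (ha : a.val + 1 = n) (hz : z.val = 0) (hb : b.val + 2 = n) (μ : ℝ) (hμ : 0 ≤ μ) (Γ : Set (Fin n → ℝ)) (hΓ : CondC Γ)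
    (hv : (fun i : Fin n => if i.val = 0 then -μ else 1) ∈ closure Γ) (lam : Fin n → ℝ)
    (hl : 0 < dsort lam a + μ * dsort lam b) :
    lam ∈ Γ := by
  obtain ⟨i, j, hij, h0, h1, hji, hk⟩ := bot_two a b ha hb lam
  rw [h0, h1] at hl
  have hj : 0 < lam j := by
    by_contra! hj
    have := mul_nonneg hμ (neg_nonneg.mpr hj)
    linarith
  obtain ⟨t, ht, htj, hti⟩ : ∃ t, 0 < t ∧ t < lam j ∧ 0 < lam i + μ * t := by
    have hc : Continuous fun t : ℝ => lam i + μ * t := by fun_prop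
    have e1 : ∀ᶠ t in 𝓝 (lam j), 0 < lam i + μ * t :=
      hc.continuousAt.eventually (lt_mem_nhds hl)
    have e2 : ∀ᶠ t in 𝓝 (lam j), 0 < t := lt_mem_nhds hj
    obtain ⟨t, ⟨a, b⟩, c⟩ := (((e1.and e2).filter_mono
      (nhdsWithin_le_nhds (s := Iio (lam j)))).and self_mem_nhdsWithin).exists
    exact ⟨t, b, c, a⟩
  have h3 : t⁻¹ • (lam ∘ Equiv.swap z i) ∈ Γ := by
    refine hΓ.mono_closure hv fun k => ?_
    simp only [Pi.smul_apply, Function.comp, smul_eq_mul]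
    rw [lt_inv_mul_iff₀ ht]
    split_ifs with h
    · have : k = z := Fin.ext (by omega)
      rw [this, Equiv.swap_apply_left]
      linarith
    · have : Equiv.swap z i k ≠ i := by
        intro h'
        apply h
        rw [Equiv.swap_apply_eq_iff, Equiv.swap_apply_right] at h'
        rw [h']; omega
      have := hk _ this
      linarith
  have h4 := hΓ.2.2.2.1 (Equiv.swap z i) _ (hΓ.2.2.2.2.1 _ h3 t ht)
  convert h4 using 1
  ext k
  simp [ht.ne']

/-- **Extremal cones** (Lemma 2.1): for `μ ≥ 0`,
(a) `Γ̂_μ = {λ : λ₍₁₎ + μ λ₍₂₎ > 0}` satisfies condition (C), contains `(μ,-1,…,-1)` in its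
boundary, and is the largest such cone;
(b) `Γ̌_μ = {λ : λ₍ₙ₎ + μ λ₍ₙ₋₁₎ > 0}` satisfies condition (C), contains `(-μ,1,…,1)` in its
boundary, and is the smallest such cone. -/
theorem extremal_cones
    {n : ℕ} (hn : 2 ≤ n) (μ : ℝ) (hμ : 0 ≤ μ)
    (Γhat Γcheck : Set (Fin n → ℝ))
    (hΓhat : Γhat = {lam : Fin n → ℝ |
      0 < dsort lam ⟨0, by omega⟩ + μ * dsort lam ⟨1, by omega⟩})
    (hΓcheck : Γcheck = {lam : Fin n → ℝ |
      0 < dsort lam ⟨n - 1, by omega⟩ + μ * dsort lam ⟨n - 2, by omega⟩})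
    (vminus vplus : Fin n → ℝ)
    (hvminus : vminus = fun i => if i.val = 0 then μ else -1)
    (hvplus : vplus = fun i => if i.val = 0 then -μ else 1) :
    (CondC Γhat ∧ vminus ∈ frontier Γhat ∧
      ∀ Γ : Set (Fin n → ℝ), CondC Γ → vminus ∈ frontier Γ → Γ ⊆ Γhat) ∧
    (CondC Γcheck ∧ vplus ∈ frontier Γcheck ∧
      ∀ Γ : Set (Fin n → ℝ), CondC Γ → vplus ∈ frontier Γ → Γcheck ⊆ Γ) := by
  have hhat : Γhat = {lam : Fin n → ℝ | ∃ i j, i ≠ j ∧ 0 < gmax μ i j lam} := by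
    rw [hΓhat]; ext lam; exact hat_iff ⟨0, by omega⟩ ⟨1, by omega⟩ rfl rfl μ hμ lam
  have hcheck : Γcheck = {lam : Fin n → ℝ | ∀ i j, i ≠ j → 0 < gmin μ i j lam} := by
    rw [hΓcheck]; ext lam; exact check_iff ⟨n - 1, by omega⟩ ⟨n - 2, by omega⟩ (by simp; omega) (by simp; omega) μ hμ lam
  have hC1 : CondC Γhat := hhat ▸ condC_hat ⟨0, by omega⟩ ⟨1, by omega⟩ rfl rfl μ hμ
  have hC2 : CondC Γcheck := hcheck ▸ condC_check ⟨0, by omega⟩ ⟨1, by omega⟩ rfl rfl μ hμ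
  refine ⟨⟨hC1, ?_, ?_⟩, ⟨hC2, ?_, ?_⟩⟩
  · rw [hC1.2.2.1.frontier_eq]
    refine ⟨mem_closure_of_add fun e he => ?_, ?_⟩
    · rw [hhat]
      refine ⟨⟨0, by omega⟩, ⟨1, by omega⟩, by simp, ?_⟩
      rw [gmax_add]
      have : gmax μ (⟨0, by omega⟩ : Fin n) ⟨1, by omega⟩ vminus = 0 := by
        have h : (-1 : ℝ) ≤ μ := by linarith
        simp [gmax, hvminus, max_eq_left h, min_eq_right h]
      rw [this]; positivity
    · rw [hhat]
      rintro ⟨i, j, hij, h⟩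
      revert h
      have h : (-1 : ℝ) ≤ μ := by linarith
      have hij' : i.val ≠ j.val := fun h => hij (Fin.ext h)
      rw [imp_false, not_lt]
      simp only [gmax, hvminus]
      split_ifs
      · omega
      · simp [max_eq_left h, min_eq_right h]
      · simp [max_eq_right h, min_eq_left h]
      · simp; linarith
  · intro Γ hΓ hv lam hl
    rw [hΓhat]
    rw [hΓ.2.2.1.frontier_eq, hvminus] at hv
    exact hat_max ⟨0, by omega⟩ ⟨1, by omega⟩ rfl rfl μ hμ Γ hΓ hv.2 lam hl
  · rw [hC2.2.2.1.frontier_eq]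
    have h : -μ ≤ (1 : ℝ) := by linarith
    refine ⟨mem_closure_of_add fun e he => ?_, ?_⟩
    · rw [hcheck]
      intro i j hij
      rw [gmin_add]
      have : 0 ≤ gmin μ i j vplus := by
        have hij' : i.val ≠ j.val := fun h => hij (Fin.ext h)
        simp only [gmin, hvplus]
        split_ifs
        · omega
        · simp [max_eq_right h, min_eq_left h]
        · simp [max_eq_left h, min_eq_right h]
        · simp; linarith
      positivity
    · rw [hcheck]
      intro hh
      have := hh ⟨0, by omega⟩ ⟨1, by omega⟩ (by simp)
      simp [gmin, hvplus, max_eq_right h, min_eq_left h] at this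
  · intro Γ hΓ hv lam hl
    rw [hΓcheck] at hl
    rw [hvplus] at hv
    exact check_min ⟨0, by omega⟩ ⟨n - 1, by omega⟩ ⟨n - 2, by omega⟩ (by simp; omega) rfl (by simp; omega) μ hμ Γ hΓ hv.1 lam hl
end
end

section
/- Let n ≥ 2 and let Γ ⊂ ℝⁿ satisfy condition (C). Let 0 ≤ a < b ≤ ∞ and let v ∈ C²((a,b)) be such that the radial function x ↦ v(|x|) satisfies λ(A[v]) ∈ ∂Γ pointwise on the annulus {x ∈ ℝⁿ : a < |x| < b}. Then v coincides on (a,b) with the restriction of one of the following: (a) v(r) = C₁ + C₂·log r on (0,∞) with C₁ ∈ ℝ, C₂ ∈ (−2,0), and this case can occur only when μ_Γ⁺ = 1; (b) v(r) = (2/(μ_Γ⁺−1))·log(C₃·r^{1−μ_Γ⁺} + C₄) on (0,∞) with C₃, C₄ > 0, only when μ_Γ⁺ ∈ [0,1)∪(1,∞); (c) v(r) = C₅ + C₆·log r on (0,∞) with C₅ ∈ ℝ, C₆ ∈ (−∞,−2)∪(0,∞), only when μ_Γ⁻ = 1; (d) v(r) = (2/(μ_Γ⁻−1))·log(C₇·r^{1−μ_Γ⁻}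 + C₈) on {r : C₇·r^{1−μ_Γ⁻} + C₈ > 0} with C₇·C₈ < 0, only when μ_Γ⁻ ∈ [0,1)∪(1,∞); (e) v(r) = C or v(r) = C − 2·log r on (0,∞) with C ∈ ℝ. -/
open Filter Topology MeasureTheory Metric Set
open scoped BigOperators ENNReal NNReal

noncomputable section

/-- `μ_Γ⁻ = inf {c : (c,-1,…,-1) ∈ closure Γ} ∈ [0,∞]` (with `inf ∅ = +∞`). -/
def muMinus {n : ℕ} (Γ : Set (Fin n → ℝ)) : EReal :=
  sInf {c : EReal | ∃ r : ℝ, c = (r : EReal) ∧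
    (fun i : Fin n => if i.val = 0 then r else -1) ∈ closure Γ}

/-- `μ_Γ⁺ = sup {c : (-c,1,…,1) ∈ closure Γ} ∈ [0,∞]`. -/
def muPlus {n : ℕ} (Γ : Set (Fin n → ℝ)) : EReal :=
  sSup {c : EReal | ∃ r : ℝ, c = (r : EReal) ∧
    (fun i : Fin n => if i.val = 0 then -r else 1) ∈ closure Γ}

lemma closure_add_GammaN {n : ℕ} {Γ : Set (Fin n → ℝ)} (hΓ : CondC Γ) {lam mu : Fin n → ℝ}
    (hl : lam ∈ closure Γ) (hm : mu ∈ GammaN n) : lam + mu ∈ Γ := by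
  have hU : IsOpen {x : Fin n → ℝ | ∀ i, 0 < lam i + mu i - x i} := by
    have he : {x : Fin n → ℝ | ∀ i, 0 < lam i + mu i - x i} =
        ⋂ i, {x : Fin n → ℝ | 0 < lam i + mu i - x i} := by
      ext x; simp only [mem_ofPred_eq, mem_iInter]
    rw [he]
    refine isOpen_iInter_of_finite fun i => ?_
    exact isOpen_lt continuous_const (by fun_prop)
  obtain ⟨x, hx, hxΓ⟩ := mem_closure_iff.1 hl _ hU (fun i => by simpa using hm i)
  have := hΓ.2.2.2.2.2 x hxΓ (lam + mu - x) (fun i => by simpa using hx i)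
  simpa using this

lemma closure_smul_mem {n : ℕ} {Γ : Set (Fin n → ℝ)} (hΓ : CondC Γ) {lam : Fin n → ℝ}
    (hl : lam ∈ closure Γ) {t : ℝ} (ht : 0 < t) : t • lam ∈ closure Γ :=
  map_mem_closure (f := fun x => t • x) (continuous_const_smul t) hl
    (fun x hx => hΓ.2.2.2.2.1 x hx t ht)

lemma frontier_pos {n : ℕ} {Γ : Set (Fin n → ℝ)} (hΓ : CondC Γ) {p q : ℝ} (hq : 0 < q)
    (h : (fun i : Fin n => if i.val = 0 then p else q) ∈ frontier Γ) :
    muPlus Γ = ((-(p / q) : ℝ) : EReal) := by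
  have hc := frontier_subset_closure h
  have hn : (fun i : Fin n => if i.val = 0 then p else q) ∉ Γ := by
    have := h.2
    rwa [hΓ.2.2.1.interior_eq] at this
  apply le_antisymm
  · apply sSup_le
    rintro c ⟨r, rfl, hr⟩
    rw [EReal.coe_le_coe_iff]
    by_contra! hlt
    apply hn

    have h1 : 0 < p + q * r := by
      have : -p < r * q := by rw [← neg_div, div_lt_iff₀ hq] at hlt; exact hlt
      linarith
    obtain ⟨s, hs0, hsq, hsr⟩ : ∃ s, 0 < s ∧ s < q ∧ 0 < p + s * r := by
      have ht : Tendsto (fun s : ℝ => p + s * r) (𝓝[<] q) (𝓝 (p + q * r)) :=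
        (Continuous.tendsto (by fun_prop) q).mono_left nhdsWithin_le_nhds
      have e1 := ht.eventually (lt_mem_nhds h1)
      have e2 : ∀ᶠ s in 𝓝[<] q, 0 < s := nhdsWithin_le_nhds (lt_mem_nhds hq)
      have e3 : ∀ᶠ s in 𝓝[<] q, s < q := self_mem_nhdsWithin
      obtain ⟨s, h1, h2, h3⟩ := (e1.and (e2.and e3)).exists
      exact ⟨s, h2, h3, h1⟩
    have := closure_add_GammaN hΓ (closure_smul_mem hΓ hr hs0)
      (mu := fun i : Fin n => if i.val = 0 then p + s * r else q - s)
      (fun i => by dsimp only; split_ifs <;> linarith)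
    convert this using 1
    ext i
    simp only [Pi.add_apply, Pi.smul_apply, smul_eq_mul]
    split_ifs <;> ring
  · apply le_sSup
    refine ⟨_, rfl, ?_⟩
    have := closure_smul_mem hΓ hc (inv_pos.2 hq)
    convert this using 1
    ext i
    simp only [Pi.smul_apply, smul_eq_mul]
    split_ifs <;> field_simp

lemma frontier_neg {n : ℕ} {Γ : Set (Fin n → ℝ)} (hΓ : CondC Γ) {p q : ℝ} (hq : q < 0)
    (h : (fun i : Fin n => if i.val = 0 then p else q) ∈ frontier Γ) :
    muMinus Γ = ((-(p / q) : ℝ) : EReal) := by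
  have hc := frontier_subset_closure h
  have hn : (fun i : Fin n => if i.val = 0 then p else q) ∉ Γ := by
    have := h.2
    rwa [hΓ.2.2.1.interior_eq] at this
  apply le_antisymm
  · apply sInf_le
    refine ⟨_, rfl, ?_⟩
    have := closure_smul_mem hΓ hc (inv_pos.2 (neg_pos.2 hq))
    convert this using 1
    have hq' := hq.ne
    ext i
    simp only [Pi.smul_apply, smul_eq_mul]
    split_ifs <;> field_simp
  · apply le_sInf
    rintro c ⟨r, rfl, hr⟩
    rw [EReal.coe_le_coe_iff]
    by_contra! hlt
    apply hn
    have h1 : 0 < p - (-q) * r := by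
      have : r * (-q) < p := by
        rw [← div_neg, lt_div_iff₀ (neg_pos.2 hq)] at hlt; exact hlt
      linarith
    obtain ⟨s, hs0, hsr⟩ : ∃ s, -q < s ∧ 0 < p - s * r := by
      have ht : Tendsto (fun s : ℝ => p - s * r) (𝓝[>] (-q)) (𝓝 (p - (-q) * r)) :=
        (Continuous.tendsto (by fun_prop) (-q)).mono_left nhdsWithin_le_nhds
      have e1 := ht.eventually (lt_mem_nhds h1)
      have e3 : ∀ᶠ s in 𝓝[>] (-q), -q < s := self_mem_nhdsWithin
      obtain ⟨s, h1, h3⟩ := (e1.and e3).exists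
      exact ⟨s, h3, h1⟩
    have := closure_add_GammaN hΓ (closure_smul_mem hΓ hr (t := s) (by linarith))
      (mu := fun i : Fin n => if i.val = 0 then p - s * r else q + s)
      (fun i => by dsimp only; split_ifs <;> linarith)
    convert this using 1
    ext i
    simp only [Pi.add_apply, Pi.smul_apply, smul_eq_mul]
    split_ifs <;> ring

lemma perm_of_multiset {n : ℕ} {d e : Fin n → ℝ}
    (h : Multiset.map d Finset.univ.val = Multiset.map e Finset.univ.val) :
    ∃ σ : Equiv.Perm (Fin n), d = e ∘ σ := by
  have h1 : (List.ofFn d).Perm (List.ofFn e) := by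
    rw [Fin.univ_val_map, Fin.univ_val_map] at h
    exact Multiset.coe_eq_coe.1 h
  have h2 : List.ofFn (d ∘ Tuple.sort d) = List.ofFn (e ∘ Tuple.sort e) :=
    ((((Tuple.sort d).ofFn_comp_perm d).trans h1).trans
      ((Tuple.sort e).ofFn_comp_perm e).symm).eq_of_pairwise'
      (Tuple.monotone_sort d).sortedLE_ofFn.pairwise (Tuple.monotone_sort e).sortedLE_ofFn.pairwise
  have h3 := List.ofFn_inj.1 h2
  refine ⟨(Tuple.sort d).symm.trans (Tuple.sort e), ?_⟩
  ext i
  have := congrFun h3 ((Tuple.sort d).symm i)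
  simpa using this

lemma frontier_perm {n : ℕ} {Γ : Set (Fin n → ℝ)} (hΓ : CondC Γ) (σ : Equiv.Perm (Fin n))
    {lam : Fin n → ℝ} (h : lam ∈ frontier Γ) : lam ∘ σ ∈ frontier Γ := by
  have ho := hΓ.2.2.1
  rw [ho.frontier_eq] at h ⊢
  refine ⟨?_, fun hm => h.2 ?_⟩
  · exact map_mem_closure (f := fun x : Fin n → ℝ => x ∘ σ)
      (continuous_pi fun i => continuous_apply (σ i)) h.1 (fun x hx => hΓ.2.2.2.1 σ x hx)
  · have := hΓ.2.2.2.1 σ⁻¹ _ hm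
    convert this using 1
    ext i
    simp

lemma eigIn_diagonal {n : ℕ} {Γ : Set (Fin n → ℝ)} (hΓ : CondC Γ)
    {d : Fin n → ℝ} (h : EigIn (Matrix.diagonal d) (frontier Γ)) : d ∈ frontier Γ := by
  obtain ⟨hM, hh⟩ := h
  have h1 := hM.roots_charpoly_eq_eigenvalues
  have h2 : (Matrix.diagonal d).charpoly.roots = Multiset.map d Finset.univ.val := by
    rw [Matrix.charpoly_diagonal, Polynomial.roots_prod]
    · simp
    · simp [Finset.prod_ne_zero_iff, Polynomial.X_sub_C_ne_zero]
  rw [h2] at h1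
  obtain ⟨σ, hσ⟩ := perm_of_multiset (e := hM.eigenvalues) (by simpa using h1)
  rw [hσ]
  exact frontier_perm hΓ σ hh

lemma hasFDerivAt_norm_euc {n : ℕ} (x : Euc n) (hx : x ≠ 0) :
    HasFDerivAt (fun y : Euc n => ‖y‖) ((‖x‖⁻¹ : ℝ) • innerSL ℝ x) x := by
  have h1 : HasFDerivAt (fun y : Euc n => ‖y‖ ^ 2) (2 • innerSL ℝ x) x :=
    (hasStrictFDerivAt_norm_sq x).hasFDerivAt
  have h0 : ‖x‖ ≠ 0 := norm_ne_zero_iff.2 hx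
  have h2 := h1.sqrt (by positivity)
  have h3 : (fun y : Euc n => ‖y‖) = fun y => √(‖y‖ ^ 2) := by
    ext y; simp [Real.sqrt_sq]
  rw [h3]
  have h4 : (‖x‖⁻¹ : ℝ) • innerSL ℝ x = (1 / (2 * √(‖x‖ ^ 2))) • 2 • innerSL ℝ x := by
    rw [Real.sqrt_sq (norm_nonneg _), ← Nat.cast_smul_eq_nsmul ℝ, smul_smul]
    congr 1
    push_cast
    field_simp
  rw [h4]
  exact h2

lemma innerSL_single {n : ℕ} (y : Euc n) (j : Fin n) :
    innerSL ℝ y (EuclideanSpace.single j (1:ℝ)) = y j := by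
  rw [innerSL_apply_apply, real_inner_comm, EuclideanSpace.inner_single_left]
  simp

lemma mobius_radial {n : ℕ} (i0 : Fin n) (hi0 : i0.val = 0) {I : Set ℝ} (hIo : IsOpen I) (hpos : ∀ r ∈ I, 0 < r)
    (v v1 v2 : ℝ → ℝ) (h1 : ∀ r ∈ I, HasDerivAt v (v1 r) r) (h2 : ∀ r ∈ I, HasDerivAt v1 (v2 r) r)
    {r : ℝ} (hr : r ∈ I) :
    mobius (fun y : Euc n => v ‖y‖) (EuclideanSpace.single i0 r) =
      Matrix.diagonal (fun i : Fin n => if i.val = 0 then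
        Real.exp (-2 * v r) * (- v2 r + v1 r ^ 2 / 2) else
        Real.exp (-2 * v r) * (- v1 r / r - v1 r ^ 2 / 2)) := by
  have hr0 := hpos r hr
  set x : Euc n := EuclideanSpace.single i0 r with hx
  have hnx : ‖x‖ = r := by simp [hx, abs_of_pos hr0]
  have hF : ∀ y : Euc n, ‖y‖ ∈ I → HasFDerivAt (fun y : Euc n => v ‖y‖)
      (v1 ‖y‖ • ((‖y‖⁻¹ : ℝ) • innerSL ℝ y)) y := by
    intro y hy
    have hy0 : y ≠ 0 := norm_pos_iff.1 (hpos _ hy)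
    exact (h1 _ hy).comp_hasFDerivAt y (hasFDerivAt_norm_euc y hy0)
  have hFa : ∀ y : Euc n, ‖y‖ ∈ I → ∀ j, fderiv ℝ (fun y : Euc n => v ‖y‖) y
      (EuclideanSpace.single j 1) = v1 ‖y‖ * ‖y‖⁻¹ * y j := by
    intro y hy j
    rw [(hF y hy).fderiv]
    simp only [smul_apply, innerSL_single, smul_eq_mul, mul_assoc]
  have hxI : ‖x‖ ∈ I := by rw [hnx]; exact hr
  have hev : ∀ᶠ y in 𝓝 x, ‖y‖ ∈ I := continuous_norm.continuousAt.eventually_mem (hIo.mem_nhds hxI)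
  have hx0 : x ≠ 0 := norm_pos_iff.1 (hpos _ hxI)
  have hxi : ∀ i, x i = if i = i0 then r else 0 := by
    intro i
    simp [hx, Pi.single_apply]
  have hpg : ∀ i, pgrad (fun y : Euc n => v ‖y‖) x i = if i = i0 then v1 r else 0 := by
    intro i
    unfold pgrad
    rw [hFa x hxI, hnx, hxi]
    split_ifs
    · field_simp
    · simp
  have hph : ∀ i j, phess (fun y : Euc n => v ‖y‖) x i j =
      if i = j then (if i = i0 then v2 r else v1 r / r) else 0 := by
    intro i j
    unfold phess
    have e : (fun y => fderiv ℝ (fun y : Euc n => v ‖y‖) y (EuclideanSpace.single j 1)) =ᶠ[𝓝 x]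
        fun y => v1 ‖y‖ * ‖y‖⁻¹ * y j := hev.mono fun y hy => hFa y hy j
    rw [e.fderiv_eq]
    have hN := hasFDerivAt_norm_euc x hx0
    have hV := (h2 _ hxI).comp_hasFDerivAt x hN
    have hInv := (hasDerivAt_inv (norm_ne_zero_iff.2 hx0)).comp_hasFDerivAt x hN
    have hP : HasFDerivAt (fun y : Euc n => y j) (EuclideanSpace.proj (𝕜 := ℝ) j) x :=
      (EuclideanSpace.proj (𝕜 := ℝ) j : Euc n →L[ℝ] ℝ).hasFDerivAt
    have hT := (hV.mul hInv).mul hP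
    have hT' : HasFDerivAt (fun y : Euc n => v1 ‖y‖ * ‖y‖⁻¹ * y j) _ x := hT
    rw [hT'.fderiv]
    simp only [add_apply, smul_apply, innerSL_single,
      smul_eq_mul, hxi, hnx, Function.comp, Pi.mul_apply, PiLp.proj_apply,
      EuclideanSpace.single_apply]
    by_cases hij : i = j
    · subst hij
      by_cases hi : i = i0
      · simp [hi]; field_simp; ring
      · simp [hi]; field_simp
    · have hji : ¬ j = i := fun h => hij h.symm
      by_cases hi : i = i0
      · have : ¬ j = i0 := fun h => hij (hi.trans h.symm)
        simp [hij, hji, this]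
      · simp [hi, hij, hji]
  have hsum : ∑ k, (pgrad (fun y : Euc n => v ‖y‖) x k) ^ 2 = v1 r ^ 2 := by
    simp [hpg, ite_pow]
  have hi0' : ∀ i : Fin n, i.val = 0 ↔ i = i0 := fun i => by rw [Fin.ext_iff, hi0]
  ext i j
  unfold mobius
  rw [Matrix.smul_apply, Matrix.of_apply, hsum, hph, hpg, hpg, Matrix.diagonal_apply]
  simp only [hi0', smul_eq_mul, hnx]
  by_cases hij : i = j
  · subst hij
    by_cases hi : i = i0
    · simp [hi]; ring
    · simp [hi]; ring
  · have : ¬ (i = i0 ∧ j = i0) := fun h => hij (h.1.trans h.2.symm)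
    by_cases hi : i = i0
    · have : ¬ j = i0 := fun h => hij (hi.trans h.symm)
      simp [hij, this]
    · simp [hi, hij]

lemma hasDerivAt_posPart_sq (x : ℝ) :
    HasDerivAt (fun y : ℝ => (max y 0) ^ 2) (2 * max x 0) x := by
  rcases lt_trichotomy x 0 with h | h | h
  · have e : (fun y : ℝ => (max y 0) ^ 2) =ᶠ[𝓝 x] fun _ => 0 := by
      filter_upwards [gt_mem_nhds h] with y hy
      simp [max_eq_right hy.le]
    rw [max_eq_right h.le, mul_zero]
    exact (hasDerivAt_const x 0).congr_of_eventuallyEq e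
  · subst h
    have : (fun y : ℝ => (max y 0) ^ 2) =O[𝓝 0] fun y : ℝ => ‖y - 0‖ ^ 2 := by
      refine Asymptotics.IsBigO.of_bound 1 (Eventually.of_forall fun y => ?_)
      simp only [norm_pow, Real.norm_eq_abs, sub_zero, abs_abs, one_mul]
      rcases le_total y 0 with h | h
      · rw [max_eq_right h]; simp [sq_nonneg]
      · rw [max_eq_left h]
    have := (this.hasFDerivAt (𝕜 := ℝ) (by norm_num)).hasDerivAt
    simpa using this
  · have e : (fun y : ℝ => (max y 0) ^ 2) =ᶠ[𝓝 x] fun y => y ^ 2 := by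
      filter_upwards [lt_mem_nhds h] with y hy
      simp [max_eq_left hy.le]
    rw [max_eq_left h.le]
    have := (hasDerivAt_pow 2 x).congr_of_eventuallyEq e
    simpa using this

lemma const_of_hasDerivAt_zero {I : Set ℝ} (hIo : IsOpen I) (hIc : IsPreconnected I) {f : ℝ → ℝ}
    (h : ∀ r ∈ I, HasDerivAt f 0 r) : ∃ c, ∀ r ∈ I, f r = c :=
  hIo.exists_is_const_of_deriv_eq_zero hIc
    (fun r hr => (h r hr).differentiableAt.differentiableWithinAt) (fun r hr => (h r hr).deriv)

lemma sign_persist {I : Set ℝ} (hIo : IsOpen I) (hIc : IsPreconnected I)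
    (hpos : ∀ r ∈ I, 0 < r) {v W W1 : ℝ → ℝ} (hv : ∀ r ∈ I, HasDerivAt v (W r / r) r)
    (hW : ∀ r ∈ I, HasDerivAt W (W1 r) r) (ε k : ℝ)
    (hode : ∀ r ∈ I, 0 < ε * (W r * (W r + 2)) → r * W1 r = k * (W r * (W r + 2) / 2))
    {r0 : ℝ} (hr0 : r0 ∈ I) (h0 : 0 < ε * (W r0 * (W r0 + 2))) :
    ∀ r ∈ I, 0 < ε * (W r * (W r + 2)) := by
  set F : ℝ → ℝ := fun r => Real.exp (-k * v r - k * Real.log r) with hF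
  set h : ℝ → ℝ := fun r => (max (ε * (W r * (W r + 2))) 0) ^ 2 * F r ^ 2 with hh
  have hd : ∀ r ∈ I, HasDerivAt h 0 r := by
    intro r hr
    have hr' := (hpos r hr).ne'
    have dF : HasDerivAt F (F r * (-k * (W r / r) - k * r⁻¹)) r :=
      (((hv r hr).const_mul (-k)).sub ((Real.hasDerivAt_log hr').const_mul k)).exp
    have dG : HasDerivAt (fun r => ε * (W r * (W r + 2)))
        (ε * (W1 r * (W r + 2) + W r * W1 r)) r :=
      ((hW r hr).mul ((hW r hr).add_const 2)).const_mul ε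
    have dM := (hasDerivAt_posPart_sq (ε * (W r * (W r + 2)))).comp r dG
    have dT := dM.mul (dF.pow 2)
    have dT' : HasDerivAt h _ r := dT
    convert dT' using 1
    by_cases hs : 0 < ε * (W r * (W r + 2))
    · have e := hode r hr hs
      have e' : W1 r = k * (W r * (W r + 2) / 2) / r := by
        rw [← e]; field_simp
      simp only [Function.comp, max_eq_left hs.le, e']
      simp
      field_simp
      ring
    · push Not at hs
      simp only [Function.comp, max_eq_right hs]
      simp
  obtain ⟨c, hc⟩ := const_of_hasDerivAt_zero hIo hIc hd
  have hFpos : ∀ r, 0 < F r := fun r => Real.exp_pos _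
  have hcpos : 0 < c := by
    rw [← hc r0 hr0]
    simp only [hh, max_eq_left h0.le]
    have := hFpos r0
    positivity
  intro r hr
  by_contra! hs
  have := hc r hr
  simp only [hh, max_eq_right hs] at this
  norm_num at this
  exact hcpos.ne this

lemma conserved {I : Set ℝ} (hIo : IsOpen I) (hIc : IsPreconnected I)
    (hpos : ∀ r ∈ I, 0 < r) {v W W1 : ℝ → ℝ} (hv : ∀ r ∈ I, HasDerivAt v (W r / r) r)
    (hW : ∀ r ∈ I, HasDerivAt W (W1 r) r) (k : ℝ)
    (hode : ∀ r ∈ I, r * W1 r = k * (W r * (W r + 2) / 2)) :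
    ∃ P Q : ℝ, ∀ r ∈ I, -(W r) / 2 * Real.exp (-k / 2 * v r) = P * r ^ k ∧
      (W r + 2) / 2 * Real.exp (-k / 2 * v r) = Q := by
  have hW1 : ∀ r ∈ I, W1 r = k * (W r * (W r + 2) / 2) / r := by
    intro r hr
    have hr' := (hpos r hr).ne'
    rw [← hode r hr]; field_simp
  have dE : ∀ r ∈ I, HasDerivAt (fun r => Real.exp (-k / 2 * v r))
      (Real.exp (-k / 2 * v r) * (-k / 2 * (W r / r))) r :=
    fun r hr => ((hv r hr).const_mul (-k / 2)).exp
  obtain ⟨Q, hQ⟩ := const_of_hasDerivAt_zero hIo hIc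
    (f := fun r => (W r + 2) / 2 * Real.exp (-k / 2 * v r)) (by
      intro r hr
      have hr' := (hpos r hr).ne'
      have := (((hW r hr).add_const 2).div_const 2).mul (dE r hr)
      refine this.congr_deriv ?_
      rw [hW1 r hr]
      field_simp
      ring)
  obtain ⟨P, hP⟩ := const_of_hasDerivAt_zero hIo hIc
    (f := fun r => (-(W r) / 2 * Real.exp (-k / 2 * v r)) * Real.exp (-k * Real.log r)) (by
      intro r hr
      have hr' := (hpos r hr).ne'
      have := (((hW r hr).neg.div_const 2).mul (dE r hr)).mul
        (((Real.hasDerivAt_log hr').const_mul (-k)).exp)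
      refine this.congr_deriv ?_
      rw [hW1 r hr]
      simp
      field_simp
      ring)
  refine ⟨P, Q, fun r hr => ⟨?_, hQ r hr⟩⟩
  rw [← hP r hr, Real.rpow_def_of_pos (hpos r hr), mul_assoc, ← Real.exp_add]
  have : -k * Real.log r + Real.log r * k = 0 := by ring
  rw [this]; simp

lemma const_log {I : Set ℝ} (hIo : IsOpen I) (hIc : IsPreconnected I)
    (hpos : ∀ r ∈ I, 0 < r) {v W : ℝ → ℝ} (hv : ∀ r ∈ I, HasDerivAt v (W r / r) r)
    (c : ℝ) (hc : ∀ r ∈ I, W r = c) : ∃ C, ∀ r ∈ I, v r = C + c * Real.log r := by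
  obtain ⟨C, hC⟩ := const_of_hasDerivAt_zero hIo hIc
    (f := fun r => v r - c * Real.log r) (by
      intro r hr
      have hr' := (hpos r hr).ne'
      refine ((hv r hr).sub ((Real.hasDerivAt_log hr').const_mul c)).congr_deriv ?_
      rw [hc r hr]; field_simp; ring)
  exact ⟨C, fun r hr => by linarith [hC r hr]⟩

/-- Integration of the ODE for W with parameter m. -/
lemma integrate {I : Set ℝ} (hIo : IsOpen I) (hIc : IsPreconnected I)
    (hpos : ∀ r ∈ I, 0 < r) {v W W1 : ℝ → ℝ} (hv : ∀ r ∈ I, HasDerivAt v (W r / r) r)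
    (hW : ∀ r ∈ I, HasDerivAt W (W1 r) r) (m : ℝ) {r0 : ℝ} (hr0 : r0 ∈ I)
    (hode : ∀ r ∈ I, r * W1 r = (1 - m) * (W r * (W r + 2) / 2)) :
    (m = 1 → ∃ C, ∀ r ∈ I, v r = C + W r0 * Real.log r) ∧
    (m ≠ 1 → ∃ P Q T : ℝ, 0 < T ∧ P = -(W r0) / 2 * T ∧ (∃ T', 0 < T' ∧ Q = (W r0 + 2) / 2 * T') ∧
      ∀ r ∈ I, 0 < P * r ^ (1 - m) + Q ∧
        v r = 2 / (m - 1) * Real.log (P * r ^ (1 - m) + Q)) := by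
  obtain ⟨P, Q, h⟩ := conserved hIo hIc hpos hv hW (1 - m) hode
  constructor
  · rintro rfl
    apply const_log hIo hIc hpos hv
    intro r hr
    have h1 := (h r hr).2
    have h2 := (h r0 hr0).2
    simp at h1 h2
    linarith
  · intro hm
    have hp : 0 < r0 ^ (1 - m) := Real.rpow_pos_of_pos (hpos r0 hr0) _
    refine ⟨P, Q, Real.exp (-(1 - m) / 2 * v r0) / r0 ^ (1 - m), by positivity, ?_,
      ⟨_, Real.exp_pos _, (h r0 hr0).2.symm⟩, ?_⟩
    · have := (h r0 hr0).1
      rw [← mul_div_assoc, this]; field_simp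
    · intro r hr
      have : P * r ^ (1 - m) + Q = Real.exp (-(1 - m) / 2 * v r) := by
        rw [← (h r hr).1, ← (h r hr).2]; ring
      rw [this, Real.log_exp]
      refine ⟨Real.exp_pos _, ?_⟩
      have : m - 1 ≠ 0 := sub_ne_zero.2 hm
      field_simp
      ring

/-- **Classification of smooth radial solutions** (Lemma 3.1): any `C²` radial solution of
`λ(A[v]) ∈ ∂Γ` on an annulus `{a < |x| < b}` (with `0 ≤ a < b ≤ ∞`) is the restriction of
one of the explicit families (a)–(e). -/
theorem radial_classification
    {n : ℕ} (hn : 2 ≤ n) (Γ : Set (Fin n → ℝ)) (hΓ : CondC Γ)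
    (a : ℝ) (b : EReal) (ha : 0 ≤ a) (hab : (a : EReal) < b)
    (I : Set ℝ) (hI : I = {r : ℝ | a < r ∧ (r : EReal) < b})
    (v : ℝ → ℝ) (hreg : ContDiffOn ℝ 2 v I)
    (hsol : ∀ x : Euc n, a < ‖x‖ → (‖x‖ : EReal) < b →
      EigIn (mobius (fun y => v ‖y‖) x) (frontier Γ)) :
    -- (a)
    (muPlus Γ = 1 ∧ ∃ C₁ C₂ : ℝ, -2 < C₂ ∧ C₂ < 0 ∧
      ∀ r ∈ I, v r = C₁ + C₂ * Real.log r) ∨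
    -- (b)
    (muPlus Γ ≠ 1 ∧ muPlus Γ ≠ ⊤ ∧ ∃ C₃ C₄ : ℝ, 0 < C₃ ∧ 0 < C₄ ∧
      ∀ r ∈ I, v r = 2 / ((muPlus Γ).toReal - 1) *
        Real.log (C₃ * r ^ (1 - (muPlus Γ).toReal) + C₄)) ∨
    -- (c)
    (muMinus Γ = 1 ∧ ∃ C₅ C₆ : ℝ, (C₆ < -2 ∨ 0 < C₆) ∧
      ∀ r ∈ I, v r = C₅ + C₆ * Real.log r) ∨
    -- (d)
    (muMinus Γ ≠ 1 ∧ muMinus Γ ≠ ⊤ ∧ ∃ C₇ C₈ : ℝ, C₇ * C₈ < 0 ∧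
      ∀ r ∈ I, 0 < C₇ * r ^ (1 - (muMinus Γ).toReal) + C₈ ∧
        v r = 2 / ((muMinus Γ).toReal - 1) *
          Real.log (C₇ * r ^ (1 - (muMinus Γ).toReal) + C₈)) ∨
    -- (e)
    (∃ C : ℝ, (∀ r ∈ I, v r = C) ∨ (∀ r ∈ I, v r = C - 2 * Real.log r)) := by
  have hIo : IsOpen I := by
    rw [hI]
    exact (isOpen_lt continuous_const continuous_id).inter
      (isOpen_lt continuous_coe_real_ereal continuous_const)
  have hIc : IsPreconnected I := by
    apply Set.OrdConnected.isPreconnected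
    rw [hI]
    refine ⟨fun x hx y hy z hz => ⟨lt_of_lt_of_le hx.1 hz.1, lt_of_le_of_lt ?_ hy.2⟩⟩
    exact EReal.coe_le_coe_iff.2 hz.2
  have hpos : ∀ r ∈ I, 0 < r := by
    intro r hr
    rw [hI] at hr
    exact lt_of_le_of_lt ha hr.1
  obtain ⟨r1, hr1⟩ : I.Nonempty := by
    obtain ⟨q, hq1, hq2⟩ := EReal.lt_iff_exists_real_btwn.1 hab
    exact ⟨q, by rw [hI]; exact ⟨EReal.coe_lt_coe_iff.1 hq1, hq2⟩⟩
  have hd1 : ∀ r ∈ I, HasDerivAt v (deriv v r) r := fun r hr =>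
    ((hreg.differentiableOn (by norm_num)).differentiableAt (hIo.mem_nhds hr)).hasDerivAt
  have hd2 : ∀ r ∈ I, HasDerivAt (deriv v) (deriv (deriv v) r) r := fun r hr =>
    (((hreg.deriv_of_isOpen (m := 1) hIo (by norm_num)).differentiableOn
      (by norm_num)).differentiableAt (hIo.mem_nhds hr)).hasDerivAt
  set v1 := deriv v with hv1
  set v2 := deriv v1 with hv2
  set W : ℝ → ℝ := fun r => r * v1 r with hWdef
  set W1 : ℝ → ℝ := fun r => v1 r + r * v2 r with hW1def
  have hW : ∀ r ∈ I, HasDerivAt W (W1 r) r := fun r hr =>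
    ((hasDerivAt_id r).mul (hd2 r hr)).congr_deriv (by simp [hW1def])
  have hv : ∀ r ∈ I, HasDerivAt v (W r / r) r := fun r hr =>
    (hd1 r hr).congr_deriv (by have := (hpos r hr).ne'; simp only [hWdef]; field_simp)
  let i0 : Fin n := ⟨0, by omega⟩
  have hfr : ∀ r ∈ I, (fun i : Fin n => if i.val = 0 then
        Real.exp (-2 * v r) * (- v2 r + v1 r ^ 2 / 2) else
        Real.exp (-2 * v r) * (- v1 r / r - v1 r ^ 2 / 2)) ∈ frontier Γ := by
    intro r hr
    apply eigIn_diagonal hΓ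
    rw [← mobius_radial i0 rfl hIo hpos v v1 v2 hd1 hd2 hr]
    have hn : ‖(EuclideanSpace.single i0 r : Euc n)‖ = r := by
      simp [abs_of_pos (hpos r hr)]
    rw [hI] at hr
    apply hsol
    · rw [hn]; exact hr.1
    · rw [hn]; exact hr.2
  have hq : ∀ r ∈ I, - v1 r / r - v1 r ^ 2 / 2 = -(W r * (W r + 2)) / (2 * r ^ 2) := by
    intro r hr
    have := (hpos r hr).ne'
    simp only [hWdef]; field_simp; ring
  have hode : ∀ r ∈ I, ∀ m : ℝ, W r * (W r + 2) ≠ 0 →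
      -(Real.exp (-2 * v r) * (- v2 r + v1 r ^ 2 / 2) /
        (Real.exp (-2 * v r) * (- v1 r / r - v1 r ^ 2 / 2))) = m →
      r * W1 r = (1 - m) * (W r * (W r + 2) / 2) := by
    intro r hr m hne hm
    have hr' := (hpos r hr).ne'
    have he := (Real.exp_pos (-2 * v r)).ne'
    rw [mul_div_mul_left _ _ he] at hm
    have hqne : - v1 r / r - v1 r ^ 2 / 2 ≠ 0 := by
      rw [hq r hr]
      exact div_ne_zero (neg_ne_zero.2 hne) (by positivity)
    have h3 : - v2 r + v1 r ^ 2 / 2 = -m * (- v1 r / r - v1 r ^ 2 / 2) := by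
      rw [← hm, neg_neg, div_mul_cancel₀ _ hqne]
    have h4 : v2 r = v1 r ^ 2 / 2 + m * (- v1 r / r - v1 r ^ 2 / 2) := by linarith
    simp only [hW1def, hWdef, h4]
    field_simp
    ring
  have hP : ∀ r ∈ I, W r * (W r + 2) < 0 → ∃ m : ℝ, muPlus Γ = (m : EReal) ∧
      r * W1 r = (1 - m) * (W r * (W r + 2) / 2) := by
    intro r hr hs
    have hr' := hpos r hr
    refine ⟨_, frontier_pos hΓ ?_ (hfr r hr), hode r hr _ hs.ne rfl⟩
    rw [hq r hr]
    have : 0 < -(W r * (W r + 2)) := by linarith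
    positivity
  have hM : ∀ r ∈ I, 0 < W r * (W r + 2) → ∃ m : ℝ, muMinus Γ = (m : EReal) ∧
      r * W1 r = (1 - m) * (W r * (W r + 2) / 2) := by
    intro r hr hs
    have hr' := hpos r hr
    refine ⟨_, frontier_neg hΓ ?_ (hfr r hr), hode r hr _ hs.ne' rfl⟩
    rw [hq r hr, neg_div, mul_neg]
    have : 0 < Real.exp (-2 * v r) * (W r * (W r + 2) / (2 * r ^ 2)) := by positivity
    linarith
  by_cases hA : ∃ r ∈ I, W r * (W r + 2) < 0
  · obtain ⟨r0, hr0, hs0⟩ := hA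
    obtain ⟨m, hm, -⟩ := hP r0 hr0 hs0
    have hP' : ∀ r ∈ I, W r * (W r + 2) < 0 → r * W1 r = (1 - m) * (W r * (W r + 2) / 2) := by
      intro r hr hs
      obtain ⟨m', hm', h⟩ := hP r hr hs
      rw [hm, EReal.coe_eq_coe_iff] at hm'
      rwa [hm']
    have hall := sign_persist hIo hIc hpos hv hW (-1) (1 - m)
      (fun r hr h => hP' r hr (by linarith)) hr0 (by linarith)
    have hint := integrate hIo hIc hpos hv hW m hr0
      (fun r hr => hP' r hr (by linarith [hall r hr]))
    have hw1 : W r0 < 0 := by nlinarith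
    have hw2 : -2 < W r0 := by nlinarith
    by_cases hm1 : m = 1
    · left
      obtain ⟨C, hC⟩ := hint.1 hm1
      exact ⟨by rw [hm, hm1]; rfl, C, W r0, hw2, hw1, hC⟩
    · right; left
      obtain ⟨P, Q, T, hT, hPT, ⟨T', hT', hQT⟩, hC⟩ := hint.2 hm1
      refine ⟨by rw [hm]; exact_mod_cast hm1, by rw [hm]; exact EReal.coe_ne_top _, P, Q, ?_, ?_, ?_⟩
      · rw [hPT]; exact mul_pos (by linarith) hT
      · rw [hQT]; exact mul_pos (by linarith) hT'
      · rw [hm, EReal.toReal_coe]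
        exact fun r hr => (hC r hr).2
  by_cases hB : ∃ r ∈ I, 0 < W r * (W r + 2)
  · obtain ⟨r0, hr0, hs0⟩ := hB
    obtain ⟨m, hm, -⟩ := hM r0 hr0 hs0
    have hP' : ∀ r ∈ I, 0 < W r * (W r + 2) → r * W1 r = (1 - m) * (W r * (W r + 2) / 2) := by
      intro r hr hs
      obtain ⟨m', hm', h⟩ := hM r hr hs
      rw [hm, EReal.coe_eq_coe_iff] at hm'
      rwa [hm']
    have hall := sign_persist hIo hIc hpos hv hW 1 (1 - m)
      (fun r hr h => hP' r hr (by linarith)) hr0 (by linarith)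
    have hint := integrate hIo hIc hpos hv hW m hr0
      (fun r hr => hP' r hr (by linarith [hall r hr]))
    right; right
    by_cases hm1 : m = 1
    · left
      obtain ⟨C, hC⟩ := hint.1 hm1
      refine ⟨by rw [hm, hm1]; rfl, C, W r0, ?_, hC⟩
      by_contra! hcon
      nlinarith [hcon.1, hcon.2]
    · right; left
      obtain ⟨P, Q, T, hT, hPT, ⟨T', hT', hQT⟩, hC⟩ := hint.2 hm1
      refine ⟨by rw [hm]; exact_mod_cast hm1, by rw [hm]; exact EReal.coe_ne_top _, P, Q, ?_, ?_⟩
      · rw [hPT, hQT]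
        have : 0 < (W r0 * (W r0 + 2)) * (T * T') := by positivity
        linarith
      · rw [hm, EReal.toReal_coe]
        exact hC
  · push Not at hA hB
    right; right; right; right
    have hz : ∀ r ∈ I, W r * (W r + 2) = 0 := fun r hr => le_antisymm (hB r hr) (hA r hr)
    obtain ⟨c, hc⟩ := const_of_hasDerivAt_zero hIo hIc (f := W) (by
      intro r hr
      have e : (fun r => W r * (W r + 2)) =ᶠ[𝓝 r] fun _ => 0 := by
        filter_upwards [hIo.mem_nhds hr] with y hy using hz y hy
      have h1 := ((hW r hr).mul ((hW r hr).add_const 2))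
      have h2 := (hasDerivAt_const r (0:ℝ)).congr_of_eventuallyEq e
      have h3 := h1.unique h2
      have h4 : W1 r = 0 := by
        rcases mul_eq_zero.1 (hz r hr) with h | h
        · rw [h] at h3; linarith
        · have : W r = -2 := by linarith
          rw [this] at h3; linarith
      rw [← h4]; exact hW r hr)
    obtain ⟨C, hC⟩ := const_log hIo hIc hpos hv c hc
    refine ⟨C, ?_⟩
    have := hz r1 hr1
    rw [hc r1 hr1] at this
    rcases mul_eq_zero.1 this with h | h
    · left; intro r hr; rw [hC r hr, h]; ring
    · right; intro r hr; rw [hC r hr, show c = -2 by linarith]; ring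
end
end

section
/- Let n ≥ 2 and let Γ ⊂ ℝⁿ satisfy condition (C) with μ_Γ⁺ = +∞ (equivalently, (−c,1,…,1) ∈ closure(Γ) for every c > 0). Then for any constants C₁, C₂ ∈ ℝ, the function v(x) := max{C₁ − 2·log|x| , C₂} is a continuous viscosity solution of λ(A[v]) ∈ ∂Γ on ℝⁿ∖{0}. -/
open Filter Topology MeasureTheory Metric Set
open scoped BigOperators ENNReal NNReal

noncomputable section

lemma deriv_nonpos_right {g : ℝ → ℝ} {d a : ℝ} (hg : HasDerivAt g d a)
    (h : ∀ᶠ t in 𝓝[>] a, g t ≤ g a) : d ≤ 0 := by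
  have h1 : Tendsto (slope g a) (𝓝[>] a) (𝓝 d) :=
    hg.tendsto_slope.mono_left (nhdsWithin_mono _ fun x hx => ne_of_gt hx)
  refine le_of_tendsto h1 ?_
  filter_upwards [h, self_mem_nhdsWithin] with t ht hta
  rw [slope_def_field]
  exact div_nonpos_of_nonpos_of_nonneg (by linarith) (by have := mem_Ioi.1 hta; linarith)

lemma second_deriv_min {g g' : ℝ → ℝ} {d : ℝ} (hg : ∀ᶠ t in 𝓝 0, HasDerivAt g (g' t) t)
    (hg' : HasDerivAt g' d 0) (hm : ∀ᶠ t in 𝓝 (0:ℝ), g 0 ≤ g t) : g' 0 = 0 ∧ 0 ≤ d := by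
  have h0 : g' 0 = 0 := IsLocalMin.hasDerivAt_eq_zero hm hg.self_of_nhds
  refine ⟨h0, ?_⟩
  by_contra hd
  push Not at hd
  let h : ℝ → ℝ := fun t => g t + (-d/4) * t^2
  have hh : ∀ᶠ t in 𝓝 0, HasDerivAt h (g' t + (-d/4) * (2*t)) t := by
    filter_upwards [hg] with t ht
    have := ht.add ((hasDerivAt_pow 2 t).const_mul (-d/4))
    simpa [h] using! this
  have hh2 : HasDerivAt (fun t => g' t + (-d/4) * (2*t)) (d + (-d/4)*2) 0 := by
    have := hg'.add (((hasDerivAt_id (0:ℝ)).const_mul 2).const_mul (-d/4))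
    simpa using! this
  have e : deriv h =ᶠ[𝓝 0] fun t => g' t + (-d/4) * (2*t) := hh.mono fun t ht => ht.deriv
  have hmax : IsLocalMax h 0 := by
    apply isLocalMax_of_deriv_deriv_neg
    · rw [e.deriv_eq, hh2.deriv]; linarith
    · rw [hh.self_of_nhds.deriv, h0]; simp
    · exact hh.self_of_nhds.continuousAt
  have : ∀ᶠ t in 𝓝[>] (0:ℝ), False := by
    filter_upwards [nhdsWithin_le_nhds hm, nhdsWithin_le_nhds hmax, self_mem_nhdsWithin] with t h1 h2 h3
    have h3' : 0 < t := h3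
    simp only [h] at h2
    nlinarith [pow_pos h3' 2]
  exact this.exists.elim fun _ h => h

lemma euc_sum {n : ℕ} (a : Euc n) : a = ∑ i, a i • (EuclideanSpace.single i (1:ℝ) : Euc n) := by
  ext j
  simp [Finset.sum_apply, Pi.single_apply]

lemma phess_eq {n : ℕ} {φ : Euc n → ℝ} (hφ : ContDiff ℝ 2 φ) (x : Euc n) (i j : Fin n) :
    phess φ x i j = fderiv ℝ (fderiv ℝ φ) x (EuclideanSpace.single i 1) (EuclideanSpace.single j 1) := by
  have h : DifferentiableAt ℝ (fderiv ℝ φ) x :=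
    ((hφ.fderiv_right (m := 1) (by norm_num)).differentiable (by norm_num)) x
  unfold phess
  have := (h.hasFDerivAt.clm_apply (hasFDerivAt_const (EuclideanSpace.single j (1:ℝ) : Euc n) x)).fderiv
  rw [this]
  simp

lemma mobius_herm {n : ℕ} {φ : Euc n → ℝ} (hφ : ContDiff ℝ 2 φ) (x : Euc n) :
    (mobius φ x).IsHermitian := by
  have hs : IsSymmSndFDerivAt ℝ φ x := hφ.contDiffAt.isSymmSndFDerivAt (by simp)
  ext i j
  simp only [mobius, Matrix.conjTranspose_apply, Matrix.smul_apply, Matrix.of_apply, phess_eq hφ,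
    star_trivial, smul_eq_mul]
  rw [hs.eq (EuclideanSpace.single j 1), mul_comm (pgrad φ x j)]
  simp only [eq_comm]

lemma mobius_quad {n : ℕ} {φ : Euc n → ℝ} (hφ : ContDiff ℝ 2 φ) (x : Euc n) (p : ℝ)
    (hp : ∀ a, fderiv ℝ φ x a = p * inner ℝ x a) (a : Euc n) :
    (a.ofLp ⬝ᵥ (mobius φ x).mulVec a.ofLp) = Real.exp (-2 * φ x) *
      (- fderiv ℝ (fderiv ℝ φ) x a a + p^2 * (inner ℝ x a)^2 - (1/2) * p^2 * ‖x‖^2 * ‖a‖^2) := by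
  have hD : fderiv ℝ (fderiv ℝ φ) x a a = ∑ i, ∑ j, a i * (phess φ x i j * a j) := by
    conv_lhs => rw [euc_sum a]
    simp only [map_sum, map_smul, sum_apply, smul_apply,
      smul_eq_mul, Finset.mul_sum, phess_eq hφ]
    rw [Finset.sum_comm]
    refine Finset.sum_congr rfl fun i _ => Finset.sum_congr rfl fun j _ => ?_
    ring
  have hg : ∀ i, pgrad φ x i = p * x i := by
    intro i; unfold pgrad; rw [hp]; simp [EuclideanSpace.inner_single_right]
  have hx : ‖x‖^2 = ∑ i, x i ^2 := by simp [EuclideanSpace.norm_sq_eq]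
  have ha : ‖a‖^2 = ∑ i, a i ^2 := by simp [EuclideanSpace.norm_sq_eq]
  have hxa : inner ℝ x a = ∑ i, x i * a i := by
    simp [PiLp.inner_apply, mul_comm]
  have h2 : (inner ℝ x a)^2 = ∑ i, ∑ j, a i * (x i * x j * a j) := by
    rw [hxa, sq, Finset.sum_mul_sum]
    refine Finset.sum_congr rfl fun i _ => Finset.sum_congr rfl fun j _ => ?_
    ring
  have h3 : ‖a‖^2 = ∑ i, ∑ j, a i * ((if i = j then (1:ℝ) else 0) * a j) := by
    rw [ha]; simp [sq]
  rw [hD, h2, h3]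
  simp only [mobius, hg, mul_pow, ← Finset.mul_sum, ← hx]
  simp only [dotProduct, Matrix.mulVec, Matrix.smul_apply, Matrix.of_apply, smul_eq_mul,
    Finset.mul_sum, ← Finset.sum_neg_distrib, ← Finset.sum_add_distrib, ← Finset.sum_sub_distrib]
  refine Finset.sum_congr rfl fun i _ => Finset.sum_congr rfl fun j _ => ?_
  ring

lemma herm_dot {n : ℕ} {M : Matrix (Fin n) (Fin n) ℝ} (hM : M.IsHermitian) (i j : Fin n) :
    (hM.eigenvectorBasis i).ofLp ⬝ᵥ (hM.eigenvectorBasis j).ofLp = if i = j then 1 else 0 := by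
  have := orthonormal_iff_ite.1 hM.eigenvectorBasis.orthonormal i j
  rw [← this]
  simp [PiLp.inner_apply, dotProduct, mul_comm]

lemma eig_nonpos {n : ℕ} {M : Matrix (Fin n) (Fin n) ℝ} (hM : M.IsHermitian)
    (h : ∀ a : Euc n, a.ofLp ⬝ᵥ M.mulVec a.ofLp ≤ 0) (i : Fin n) : hM.eigenvalues i ≤ 0 := by
  have := h (hM.eigenvectorBasis i)
  rw [hM.mulVec_eigenvectorBasis] at this
  simpa [herm_dot] using this

lemma eig_two {n : ℕ} {M : Matrix (Fin n) (Fin n) ℝ} (hM : M.IsHermitian) (x : Euc n)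
    (h : ∀ a : Euc n, inner ℝ x a = 0 → 0 ≤ a.ofLp ⬝ᵥ M.mulVec a.ofLp) (i j : Fin n)
    (hij : i ≠ j) (hi : hM.eigenvalues i < 0) : 0 ≤ hM.eigenvalues j := by
  by_contra hj
  push Not at hj
  have key : ∀ α β : ℝ, inner ℝ x (α • hM.eigenvectorBasis i + β • hM.eigenvectorBasis j) = 0 →
      0 ≤ α^2 * hM.eigenvalues i + β^2 * hM.eigenvalues j := by
    intro α β h0
    have := h _ h0
    simp only [WithLp.ofLp_add, WithLp.ofLp_smul, Matrix.mulVec_add, Matrix.mulVec_smul,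
      hM.mulVec_eigenvectorBasis, dotProduct_add, add_dotProduct, dotProduct_smul,
      smul_dotProduct, herm_dot, hij, hij.symm, smul_eq_mul] at this
    simp at this
    nlinarith
  by_cases hz : inner ℝ x (hM.eigenvectorBasis i) = 0
  · have := key 1 0 (by simp [hz])
    linarith
  · have := key (inner ℝ x (hM.eigenvectorBasis j)) (-inner ℝ x (hM.eigenvectorBasis i))
      (by simp only [inner_add_right, inner_smul_right]; ring)
    have h1 : 0 < (-inner ℝ x (hM.eigenvectorBasis i))^2 := sq_pos_iff.2 (neg_ne_zero.2 hz)
    nlinarith [sq_nonneg (inner ℝ x (hM.eigenvectorBasis j))]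

lemma cone_nonneg {n : ℕ} {Γ : Set (Fin n → ℝ)} (hΓ : CondC Γ) {lam mu : Fin n → ℝ}
    (hl : lam ∈ Γ) (h : ∀ i, lam i ≤ mu i) : mu ∈ Γ := by
  obtain ⟨-, -, ho, -, -, hadd⟩ := hΓ
  have hc : Tendsto (fun t : ℝ => lam - t • (fun _ => (1:ℝ))) (𝓝[>] 0) (𝓝 lam) := by
    have : Continuous (fun t : ℝ => lam - t • (fun _ : Fin n => (1:ℝ))) := by fun_prop
    have := this.tendsto 0
    simp only [zero_smul, sub_zero] at this
    exact this.mono_left nhdsWithin_le_nhds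
  obtain ⟨t, ht, ht0⟩ := ((hc.eventually (ho.mem_nhds hl)).and self_mem_nhdsWithin).exists
  have := hadd _ ht (mu - (lam - t • (fun _ => (1:ℝ)))) (by
    intro i
    have := h i
    have h0 : 0 < t := ht0
    simp; linarith)
  simpa using this

lemma cone_zero {n : ℕ} {Γ : Set (Fin n → ℝ)} (hΓ : CondC Γ) : (0 : Fin n → ℝ) ∉ Γ := by
  intro h0
  obtain ⟨-, hu, ho, -, ht, -⟩ := hΓ
  apply hu
  ext lam
  simp only [mem_univ, iff_true]
  have hc : Tendsto (fun t : ℝ => t • lam) (𝓝[>] 0) (𝓝 0) := by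
    have : Continuous (fun t : ℝ => t • lam) := by fun_prop
    have := this.tendsto 0
    simp only [zero_smul] at this
    exact this.mono_left nhdsWithin_le_nhds
  obtain ⟨t, h1, h2⟩ := ((hc.eventually (ho.mem_nhds h0)).and self_mem_nhdsWithin).exists
  have h2 : 0 < t := h2
  have := ht _ h1 t⁻¹ (by positivity)
  rwa [smul_smul, inv_mul_cancel₀ h2.ne', one_smul] at this

lemma closure_nonneg {n : ℕ} {Γ : Set (Fin n → ℝ)} (hΓ : CondC Γ) {lam mu : Fin n → ℝ}
    (hl : lam ∈ closure Γ) (h : ∀ i, lam i ≤ mu i) : mu ∈ closure Γ := by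
  have : MapsTo (fun y => y + (mu - lam)) Γ Γ := by
    intro y hy
    exact cone_nonneg hΓ hy fun i => by simp [h i]
  have := map_mem_closure (by fun_prop) hl this
  simpa using this

lemma closure_eig {n : ℕ} (hn : 2 ≤ n) {Γ : Set (Fin n → ℝ)} (hΓ : CondC Γ)
    (hmu : ∀ c : ℝ, 0 < c → (fun i : Fin n => if i.val = 0 then -c else 1) ∈ closure Γ)
    (lam : Fin n → ℝ) (i₀ : Fin n) (h : ∀ i, i ≠ i₀ → 0 ≤ lam i) : lam ∈ closure Γ := by
  let z : Fin n := ⟨0, by omega⟩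
  have key : ∀ e : ℝ, 0 < e → (fun i => lam i + e) ∈ closure Γ := by
    intro e he
    have h1 := hmu ((|lam i₀| + 1) / e) (by positivity)
    have h2 := map_mem_closure (f := fun y => e • (y ∘ (Equiv.swap z i₀))) (t := Γ) (by fun_prop) h1
      (fun y hy => hΓ.2.2.2.2.1 _ (hΓ.2.2.2.1 _ _ hy) _ he)
    refine closure_nonneg hΓ h2 fun i => ?_
    by_cases hi : i = i₀
    · subst hi
      have : e * ((|lam i| + 1) / e) = |lam i| + 1 := by field_simp
      simp [z]
      nlinarith [neg_abs_le (lam i)]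
    · have : (Equiv.swap z i₀ i).val ≠ 0 := by
        intro h0
        have : Equiv.swap z i₀ i = z := Fin.ext h0
        apply hi
        have := congrArg (Equiv.swap z i₀) this
        simpa using this
      simp [this, h i hi]
  have hc : Tendsto (fun e : ℝ => fun i => lam i + e) (𝓝[>] 0) (𝓝 lam) := by
    have : Continuous (fun e : ℝ => fun i => lam i + e) := by fun_prop
    have := this.tendsto 0
    simp only [add_zero] at this
    exact this.mono_left nhdsWithin_le_nhds
  exact isClosed_closure.mem_of_tendsto hc (eventually_mem_nhdsWithin.mono fun e he => key e he)

/-- derivatives of `φ ∘ γ`. -/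
lemma curve_derivs {n : ℕ} {φ : Euc n → ℝ} (hφ : ContDiff ℝ 2 φ) {γ γ' : ℝ → Euc n} {γ'' : Euc n}
    (h1 : ∀ t, HasDerivAt γ (γ' t) t) (h2 : HasDerivAt γ' γ'' 0) :
    (∀ t, HasDerivAt (fun t => φ (γ t)) (fderiv ℝ φ (γ t) (γ' t)) t) ∧
    HasDerivAt (fun t => fderiv ℝ φ (γ t) (γ' t))
      (fderiv ℝ (fderiv ℝ φ) (γ 0) (γ' 0) (γ' 0) + fderiv ℝ φ (γ 0) γ'') 0 := by
  constructor
  · intro t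
    exact ((hφ.differentiable (by norm_num)) (γ t)).hasFDerivAt.comp_hasDerivAt t (h1 t)
  · have h : DifferentiableAt ℝ (fderiv ℝ φ) (γ 0) :=
      ((hφ.fderiv_right (m := 1) (by norm_num)).differentiable (by norm_num)) _
    exact (h.hasFDerivAt.comp_hasDerivAt 0 (h1 0)).clm_apply h2

lemma quad_line {n : ℕ} {φ : Euc n → ℝ} (hφ : ContDiff ℝ 2 φ) (x₀ : Euc n) (h0 : x₀ ≠ 0)
    (h : ∀ᶠ x in 𝓝 x₀, φ x₀ + 2 * Real.log ‖x₀‖ ≤ φ x + 2 * Real.log ‖x‖) (a : Euc n) :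
    a.ofLp ⬝ᵥ (mobius φ x₀).mulVec a.ofLp ≤ 0 := by
  have hr : 0 < ‖x₀‖ := norm_pos_iff.2 h0
  have key : ∀ a : Euc n, fderiv ℝ φ x₀ a = (-2 / ‖x₀‖^2) * inner ℝ x₀ a ∧
      0 ≤ fderiv ℝ (fderiv ℝ φ) x₀ a a +
        (2 * ‖a‖^2 * ‖x₀‖^2 - 2 * inner ℝ x₀ a * (2 * inner ℝ x₀ a)) / (‖x₀‖^2)^2 := by
    intro a
    let γ : ℝ → Euc n := fun t => x₀ + t • a
    let N : ℝ → ℝ := fun t => ‖x₀‖^2 + 2 * inner ℝ x₀ a * t + ‖a‖^2 * t^2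
    let N' : ℝ → ℝ := fun t => 2 * inner ℝ x₀ a + ‖a‖^2 * (2 * t)
    have hN : ∀ t, ‖γ t‖^2 = N t := by
      intro t
      simp only [γ, N, norm_add_sq_real, inner_smul_right, norm_smul, mul_pow, Real.norm_eq_abs, sq_abs]
      ring
    have h1 : ∀ t, HasDerivAt γ a t := by
      intro t
      have := ((hasDerivAt_id t).smul_const a).const_add x₀
      rw [one_smul] at this
      exact this
    obtain ⟨d1, d2⟩ := curve_derivs hφ h1 (hasDerivAt_const (0:ℝ) a)
    have hγ0 : γ 0 = x₀ := by simp [γ]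
    have hγc : Tendsto γ (𝓝 0) (𝓝 x₀) := by
      have := (h1 0).continuousAt.tendsto
      rwa [hγ0] at this
    have hN0 : N 0 = ‖x₀‖^2 := by simp [N]
    have dN : ∀ t, HasDerivAt N (N' t) t := by
      intro t
      have := (((hasDerivAt_id t).const_mul (2 * inner ℝ x₀ a)).const_add (‖x₀‖^2)).add
        ((hasDerivAt_pow 2 t).const_mul (‖a‖^2))
      simpa [N, N'] using! this
    have dN' : HasDerivAt N' (‖a‖^2 * 2) 0 := by
      have := (((hasDerivAt_id (0:ℝ)).const_mul 2).const_mul (‖a‖^2)).const_add (2 * inner ℝ x₀ a)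
      simpa [N'] using! this
    have hne : ∀ᶠ t in 𝓝 (0:ℝ), N t ≠ 0 := by
      apply (dN 0).continuousAt.eventually_ne
      rw [hN0]; positivity
    have hN0' : N 0 ≠ 0 := by rw [hN0]; positivity
    have res := second_deriv_min (g := fun t => φ (γ t) + Real.log (N t))
      (hne.mono fun t ht => (d1 t).add ((dN t).log ht)) (d2.add (dN'.div (dN 0) hN0')) (by
        filter_upwards [hγc.eventually h] with t ht
        rw [← hN, ← hN, hγ0, Real.log_pow, Real.log_pow]
        push_cast
        exact ht)
    simp only [hγ0, hN0, map_zero, add_zero, N', mul_zero] at res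
    constructor
    · have := res.1
      rw [eq_neg_of_add_eq_zero_left this]; ring
    · have := res.2
      rwa [mul_comm (‖a‖^2) 2] at this
  rw [mobius_quad hφ x₀ _ (fun a => (key a).1)]
  apply mul_nonpos_of_nonneg_of_nonpos (Real.exp_pos _).le
  have := (key a).2
  have e : (2 * ‖a‖^2 * ‖x₀‖^2 - 2 * inner ℝ x₀ a * (2 * inner ℝ x₀ a)) / (‖x₀‖^2)^2
    = - ((-2 / ‖x₀‖^2)^2 * (inner ℝ x₀ a)^2 - (1/2) * (-2 / ‖x₀‖^2)^2 * ‖x₀‖^2 * ‖a‖^2) := by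
    field_simp
    ring
  rw [e] at this
  linarith

lemma quad_const {n : ℕ} {φ : Euc n → ℝ} (hφ : ContDiff ℝ 2 φ) (x₀ : Euc n)
    (h : ∀ᶠ x in 𝓝 x₀, φ x₀ ≤ φ x) (a : Euc n) :
    a.ofLp ⬝ᵥ (mobius φ x₀).mulVec a.ofLp ≤ 0 := by
  have key : ∀ a : Euc n, fderiv ℝ φ x₀ a = 0 * inner ℝ x₀ a ∧
      0 ≤ fderiv ℝ (fderiv ℝ φ) x₀ a a := by
    intro a
    let γ : ℝ → Euc n := fun t => x₀ + t • a
    have h1 : ∀ t, HasDerivAt γ a t := by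
      intro t
      have := ((hasDerivAt_id t).smul_const a).const_add x₀
      rw [one_smul] at this
      exact this
    obtain ⟨d1, d2⟩ := curve_derivs hφ h1 (hasDerivAt_const (0:ℝ) a)
    have hγ0 : γ 0 = x₀ := by simp [γ]
    have hγc : Tendsto γ (𝓝 0) (𝓝 x₀) := by
      have := (h1 0).continuousAt.tendsto
      rwa [hγ0] at this
    have res := second_deriv_min (.of_forall d1) d2 (by
        filter_upwards [hγc.eventually h] with t ht
        rwa [hγ0])
    simpa [hγ0] using res
  rw [mobius_quad hφ x₀ _ (fun a => (key a).1)]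
  apply mul_nonpos_of_nonneg_of_nonpos (Real.exp_pos _).le
  have := (key a).2
  simp; linarith

lemma quad_super {n : ℕ} {φ : Euc n → ℝ} (hφ : ContDiff ℝ 2 φ) (x₀ : Euc n) (h0 : x₀ ≠ 0)
    (C₁ C₂ : ℝ) (h00 : φ x₀ = max (C₁ - 2 * Real.log ‖x₀‖) C₂)
    (h : ∀ᶠ x in 𝓝 x₀, φ x ≤ max (C₁ - 2 * Real.log ‖x‖) C₂) (a : Euc n)
    (ha : inner ℝ x₀ a = 0) :
    0 ≤ a.ofLp ⬝ᵥ (mobius φ x₀).mulVec a.ofLp := by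
  have hr : 0 < ‖x₀‖ := norm_pos_iff.2 h0
  have hdiff : HasFDerivAt φ (fderiv ℝ φ x₀) x₀ :=
    ((hφ.differentiable (by norm_num)) x₀).hasFDerivAt
  have circ : ∀ w : Euc n, inner ℝ x₀ w = 0 → ‖w‖ = ‖x₀‖ → fderiv ℝ φ x₀ w = 0 ∧
      fderiv ℝ (fderiv ℝ φ) x₀ w w ≤ fderiv ℝ φ x₀ x₀ := by
    intro w hw hwn
    let γ : ℝ → Euc n := fun t => Real.cos t • x₀ + Real.sin t • w
    let γ' : ℝ → Euc n := fun t => (-Real.sin t) • x₀ + Real.cos t • w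
    have h1 : ∀ t, HasDerivAt γ (γ' t) t := fun t =>
      ((Real.hasDerivAt_cos t).smul_const x₀).add ((Real.hasDerivAt_sin t).smul_const w)
    have h2 : HasDerivAt γ' ((-Real.cos 0) • x₀ + (-Real.sin 0) • w) 0 :=
      ((Real.hasDerivAt_sin 0).neg.smul_const x₀).add ((Real.hasDerivAt_cos 0).smul_const w)
    obtain ⟨d1, d2⟩ := curve_derivs hφ h1 h2
    have hγ0 : γ 0 = x₀ := by simp [γ]
    have hγ'0 : γ' 0 = w := by simp [γ']
    have hγc : Tendsto γ (𝓝 0) (𝓝 x₀) := by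
      have := (h1 0).continuousAt.tendsto
      rwa [hγ0] at this
    have hn : ∀ t, ‖γ t‖ = ‖x₀‖ := by
      intro t
      have : ‖γ t‖^2 = ‖x₀‖^2 := by
        simp only [γ, norm_add_sq_real, inner_smul_right, inner_smul_left, norm_smul, mul_pow,
          Real.norm_eq_abs, sq_abs, hw, hwn]
        have := Real.sin_sq_add_cos_sq t
        simp only [mul_zero, add_zero]
        rw [← add_mul, add_comm, this, one_mul]
      exact (pow_left_inj₀ (norm_nonneg _) (norm_nonneg _) two_ne_zero).1 this
    have res := second_deriv_min (.of_forall fun t => (d1 t).neg) d2.neg (by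
        filter_upwards [hγc.eventually h] with t ht
        rw [hn, ← h00] at ht
        simpa [hγ0] using! ht)
    simp [hγ0, hγ'0] at res
    exact ⟨res.1, by linarith [res.2]⟩
  have tang : ∀ w : Euc n, inner ℝ x₀ w = 0 → fderiv ℝ φ x₀ w = 0 ∧
      fderiv ℝ (fderiv ℝ φ) x₀ w w ≤ (fderiv ℝ φ x₀ x₀ / ‖x₀‖^2) * ‖w‖^2 := by
    intro w hw
    by_cases hw0 : w = 0
    · simp [hw0]
    have hwp : 0 < ‖w‖ := norm_pos_iff.2 hw0
    have := circ ((‖x₀‖ / ‖w‖) • w) (by rw [inner_smul_right, hw, mul_zero])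
      (by rw [norm_smul, norm_div, norm_norm, norm_norm]; field_simp)
    simp only [map_smul, smul_apply, smul_eq_mul] at this
    have hk : 0 < ‖x₀‖ / ‖w‖ := by positivity
    refine ⟨(mul_eq_zero.1 this.1).resolve_left hk.ne', ?_⟩
    have h2 := this.2
    rw [div_mul_eq_mul_div, le_div_iff₀ (by positivity)]
    calc _ = (‖x₀‖ / ‖w‖ * (‖x₀‖ / ‖w‖ * (fderiv ℝ (fderiv ℝ φ) x₀ w w))) * ‖w‖^2 := by
          field_simp
      _ ≤ _ := by gcongr
  set p := fderiv ℝ φ x₀ x₀ / ‖x₀‖^2 with hp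
  have hgrad : ∀ b, fderiv ℝ φ x₀ b = p * inner ℝ x₀ b := by
    intro b
    have := (tang (b - (inner ℝ x₀ b / ‖x₀‖^2) • x₀) (by
      rw [inner_sub_right, inner_smul_right, real_inner_self_eq_norm_sq]; field_simp; ring)).1
    rw [map_sub, map_smul, smul_eq_mul] at this
    rw [sub_eq_zero.1 this, hp]; ring
  -- radial bounds
  have rad : ∀ s : ℝ, HasDerivAt (fun t : ℝ => φ (Real.exp (s * t) • x₀)) (s * fderiv ℝ φ x₀ x₀) 0 ∧
      ∀ᶠ t in 𝓝[>] (0:ℝ), φ (Real.exp (s * t) • x₀) ≤ max (C₁ - 2 * (s * t + Real.log ‖x₀‖)) C₂ := by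
    intro s
    have hc : HasDerivAt (fun t : ℝ => Real.exp (s * t) • x₀) (s • x₀) 0 := by
      have := (((hasDerivAt_id (0:ℝ)).const_mul s).exp).smul_const x₀
      simpa using! this
    constructor
    · have := HasFDerivAt.comp_hasDerivAt (0:ℝ) (f := fun t : ℝ => Real.exp (s * t) • x₀)
        (l := φ) (l' := fderiv ℝ φ x₀) (by simpa using hdiff) hc
      simpa using! this
    · have ht : Tendsto (fun t : ℝ => Real.exp (s * t) • x₀) (𝓝[>] 0) (𝓝 x₀) := by
        have := hc.continuousAt.tendsto
        simp only [mul_zero, Real.exp_zero, one_smul] at this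
        exact this.mono_left nhdsWithin_le_nhds
      filter_upwards [ht.eventually h] with t ht
      rwa [norm_smul, Real.norm_eq_abs, Real.abs_exp, Real.log_mul (Real.exp_pos _).ne' hr.ne',
        Real.log_exp] at ht
  have hup : fderiv ℝ φ x₀ x₀ ≤ 0 := by
    obtain ⟨r1, r2⟩ := rad 1
    have := deriv_nonpos_right r1 (by
      filter_upwards [r2, self_mem_nhdsWithin] with t ht h0
      have h0 : 0 < t := h0
      refine ht.trans ?_
      simp only [mul_zero, Real.exp_zero, one_smul, h00]
      exact max_le_max (by linarith) le_rfl)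
    linarith
  have hlo : -2 ≤ fderiv ℝ φ x₀ x₀ := by
    obtain ⟨r1, r2⟩ := rad (-1)
    have := deriv_nonpos_right (r1.sub ((hasDerivAt_id (0:ℝ)).const_mul 2)) (by
      filter_upwards [r2, self_mem_nhdsWithin] with t ht h0
      have h0 : 0 < t := h0
      have : max (C₁ - 2 * (-1 * t + Real.log ‖x₀‖)) C₂ ≤ max (C₁ - 2 * Real.log ‖x₀‖) C₂ + 2 * t :=
        max_le (by linarith [le_max_left (C₁ - 2 * Real.log ‖x₀‖) C₂])
          (by linarith [le_max_right (C₁ - 2 * Real.log ‖x₀‖) C₂])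
      rw [← h00] at this
      simp only [Pi.sub_apply, id, mul_zero, Real.exp_zero, one_smul]
      linarith)
    linarith
  have hpr : p * ‖x₀‖^2 = fderiv ℝ φ x₀ x₀ := by rw [hp]; field_simp
  have hp0 : p ≤ 0 := div_nonpos_of_nonpos_of_nonneg hup (by positivity)
  rw [mobius_quad hφ x₀ p hgrad, ha]
  apply mul_nonneg (Real.exp_pos _).le
  have h1 := (tang a ha).2
  have h2 : 0 ≤ (-p) * (‖a‖^2 * (1 + (1/2) * (p * ‖x₀‖^2))) :=
    mul_nonneg (by linarith) (mul_nonneg (by positivity) (by linarith))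
  nlinarith

/-- **A non-smooth radial viscosity solution** (Lemma 3.2): if `Γ` satisfies condition (C)
with `μ_Γ⁺ = +∞`, i.e. `(-c,1,…,1) ∈ closure Γ` for every `c > 0`, then for all constants
`C₁, C₂`, the function `v(x) = max (C₁ - 2 log |x|) C₂` is a continuous viscosity solution
of `λ(A[v]) ∈ ∂Γ` on `ℝⁿ ∖ {0}`. -/
theorem max_log_viscosity_solution
    {n : ℕ} (hn : 2 ≤ n) (Γ : Set (Fin n → ℝ)) (hΓ : CondC Γ)
    (hmu : ∀ c : ℝ, 0 < c → (fun i : Fin n => if i.val = 0 then -c else 1) ∈ closure Γ)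
    (C₁ C₂ : ℝ) (v : Euc n → ℝ)
    (hv : v = fun x => max (C₁ - 2 * Real.log ‖x‖) C₂) :
    ContinuousOn v {(0 : Euc n)}ᶜ ∧
      Supersol Γ {(0 : Euc n)}ᶜ v ∧ Subsol Γ {(0 : Euc n)}ᶜ v := by
  have hnh : ∀ x₀ ∈ ({(0 : Euc n)}ᶜ : Set (Euc n)), 𝓝[{(0 : Euc n)}ᶜ] x₀ = 𝓝 x₀ := fun x₀ hx =>
    isOpen_compl_singleton.nhdsWithin_eq hx
  subst hv
  refine ⟨?_, ?_, ?_⟩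
  · intro x hx
    have hx : ‖x‖ ≠ 0 := norm_ne_zero_iff.2 hx
    apply ContinuousAt.continuousWithinAt
    exact (continuousAt_const.sub (continuousAt_const.mul (continuous_norm.continuousAt.log hx))).max
      continuousAt_const
  · intro x₀ hx φ hφ h0 hle
    rw [hnh x₀ hx] at hle
    have hM := mobius_herm hφ x₀
    refine ⟨hM, ?_⟩
    have hq := quad_super hφ x₀ hx C₁ C₂ h0 hle
    by_cases hneg : ∃ i, hM.eigenvalues i < 0
    · obtain ⟨i, hi⟩ := hneg
      exact closure_eig hn hΓ hmu _ i fun j hj => eig_two hM x₀ hq i j hj.symm hi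
    · push Not at hneg
      exact closure_eig hn hΓ hmu _ ⟨0, by omega⟩ fun j _ => hneg j
  · intro x₀ hx φ hφ h0 hle
    rw [hnh x₀ hx] at hle
    have hM := mobius_herm hφ x₀
    refine ⟨hM, fun hin => cone_zero hΓ (cone_nonneg hΓ hin (eig_nonpos hM ?_))⟩
    simp only at h0 hle
    rcases le_total C₂ (C₁ - 2 * Real.log ‖x₀‖) with hc | hc
    · rw [max_eq_left hc] at h0
      refine quad_line hφ x₀ hx ?_
      filter_upwards [hle] with x hx
      linarith [(le_max_left _ _).trans hx]
    · rw [max_eq_right hc] at h0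
      refine quad_const hφ x₀ ?_
      filter_upwards [hle] with x hx
      rw [h0]
      exact (le_max_right _ _).trans hx
end
end
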